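/- The common lines operator C is a compact self-adjoint operator on the Hilbert space H whose set of nonzero eigenvalues is exactly { λ_n = (−1)^{n−1}/(n(n+1)) : n = 1, 2, 3, … }, and for every n ≥ 1 the eigenspace of C associated with the eigenvalue λ_n has dimension 2n+1. -/

import Mathlib

noncomputable section

open MeasureTheory Submodule
open scoped RealInnerProductSpace

abbrev V : Type := EuclideanSpace ℝ (Fin 3)

abbrev S2 : Type := Metric.sphere (0 : V) 1

/-- The plane `x^⊥` orthogonal to a point `x` of the unit sphere. -/
def plane (x : S2) : Submodule ℝ V := (ℝ ∙ (x : V))ᗮ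

/-- The common line `x^⊥ ∩ y^⊥`. -/
def cline (x y : S2) : Submodule ℝ V := plane x ⊓ plane y

/-- The common-lines kernel `C(x,y) : V → V`: orthogonal projection onto the
line `x^⊥ ∩ y^⊥`.  Its restriction to `y^⊥` is the kernel of the paper: it sends
`v ∈ y^⊥` to the orthogonal projection of `v` onto `x^⊥ ∩ y^⊥`, viewed inside `x^⊥`
(projecting the ambient `V` first onto `y^⊥` does not change the result). -/
def Cker (x y : S2) : V →ₗ[ℝ] V :=
  (cline x y).subtype ∘ₗ (orthogonalProjection (cline x y)).toLinearMap

/-- The map on the sphere induced by a linear isometry of `V`. -/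
def sphereMap (g : V ≃ₗᵢ[ℝ] V) (x : S2) : S2 :=
  ⟨g x, by
    have := mem_sphere_zero_iff_norm.mp x.2
    simp [mem_sphere_zero_iff_norm, this]⟩

/-- The Hilbert space `H` of square integrable sections of the bundle of planes, realized as
the subspace of `L²` maps `s : S² → V` with `s x ∈ x^⊥` almost everywhere; it carries the
inner product `(s₁, s₂) = ∫ ⟪s₁ x, s₂ x⟫ dx` inherited from `L²`. -/
def Hsub (μ : Measure S2) : Submodule ℝ (Lp V 2 μ) where
  carrier := {f | ∀ᵐ x ∂μ, f x ∈ plane x}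
  add_mem' := by
    intro f g hf hg
    filter_upwards [hf, hg, Lp.coeFn_add f g] with x h1 h2 h3
    simp only [Pi.add_apply] at h3
    rw [h3]; exact add_mem h1 h2
  zero_mem' := by
    filter_upwards [Lp.coeFn_zero V 2 μ] with x h
    simp only [Pi.zero_apply] at h
    rw [h]; exact zero_mem _
  smul_mem' := by
    intro c f hf
    filter_upwards [hf, Lp.coeFn_smul c f] with x h1 h2
    simp only [Pi.smul_apply] at h2
    rw [h2]; exact smul_mem _ _ h1

/-!
The kernel is an orthogonal projection onto a line, so the squared Hilbert–Schmidt norm of `C` is at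
most `1`. For a harmonic polynomial `f` of degree `n`, the tangential field `y × ∇f(y)` (`n` even)
or `y × (y × ∇f(y))` (`n` odd) is an eigensection for `λₙ`. To see this, apply `C` to the field of
an arbitrary homogeneous `f`: the result is a fixed linear combination of the fields of the
iterated Laplacians `Δʲf`, where `f` itself has coefficient `λₙ`. Since powers of linear forms span
the homogeneous polynomials, this only has to be checked on them, where it is a computation of
moments. The eigensections contribute `∑ (2n + 1) λₙ² = ∑ (1 / n² - 1 / (n + 1)²) = 1` to the
squared Hilbert–Schmidt norm. This exhausts the bound, so `C` vanishes on their orthogonal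
complement.
-/

/-! ### Harmonic polynomials -/

section Polynomial

open MvPolynomial

section CommSemiring

variable {σ R : Type*} [CommSemiring R]

theorem eval_smul_of_isHomogeneous {k : ℕ} {p : MvPolynomial σ R} (hp : p.IsHomogeneous k)
    (r : R) (y : σ → R) : eval (r • y) p = r ^ k * eval y p := by
  rw [eval_eq, eval_eq, Finset.mul_sum]
  refine Finset.sum_congr rfl fun d hd => ?_
  have hdeg : ∑ i ∈ d.support, d i = k := by
    rw [← Finsupp.degree_apply, Finsupp.degree_eq_weight_one]
    exact hp (mem_support_iff.1 hd)
  simp only [Pi.smul_apply, smul_eq_mul, mul_pow, Finset.prod_mul_distrib,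
    Finset.prod_pow_eq_pow_sum, hdeg]
  ring

instance finite_homogeneousSubmodule [Finite σ] (k : ℕ) :
    Module.Finite R (homogeneousSubmodule σ R k) :=
  Module.Finite.iff_fg.2 (homogeneousSubmodule_fg σ R k)

variable [Fintype σ]

/-- The linear form `∑ aᵢ Xᵢ` with coefficient vector `a`, as a polynomial. -/
def linearForm (a : σ → R) : MvPolynomial σ R := ∑ i, a i • X i

/-- The Laplacian `∑ ∂ᵢ²` on polynomials. -/
def laplacian (σ R : Type*) [Fintype σ] [CommSemiring R] :
    MvPolynomial σ R →ₗ[R] MvPolynomial σ R :=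
  ∑ i, (pderiv i).toLinearMap ∘ₗ (pderiv i).toLinearMap

/-- The space of homogeneous polynomials of degree `k` annihilated by the Laplacian. -/
def harmonicSubmodule (σ R : Type*) [Fintype σ] [CommSemiring R] (k : ℕ) :
    Submodule R (MvPolynomial σ R) :=
  homogeneousSubmodule σ R k ⊓ LinearMap.ker (laplacian σ R)

theorem eval_linearForm (a y : σ → R) : eval y (linearForm a) = a ⬝ᵥ y := by
  simp [linearForm, smul_eval, dotProduct]

theorem isHomogeneous_linearForm_pow (a : σ → R) (k : ℕ) :
    (linearForm a ^ k).IsHomogeneous k := by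
  have h : (linearForm a).IsHomogeneous 1 := .sum _ _ _ fun i _ => by
    simpa only [smul_eq_C_mul] using isHomogeneous_C_mul_X (a i) i
  simpa only [one_mul] using h.pow k

theorem laplacian_apply (p : MvPolynomial σ R) :
    laplacian σ R p = ∑ i, pderiv i (pderiv i p) := by
  simp [laplacian]

theorem isHomogeneous_laplacian {k : ℕ} {p : MvPolynomial σ R} (hp : p.IsHomogeneous k) :
    (laplacian σ R p).IsHomogeneous (k - 2) := by
  rw [laplacian_apply]
  exact .sum _ _ _ fun i _ => hp.pderiv.pderiv

theorem pderiv_linearForm (a : σ → R) (i : σ) : pderiv i (linearForm a) = C (a i) := by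
  classical
  simp [linearForm, pderiv_X, Pi.single_apply, smul_eq_C_mul]

theorem pderiv_linearForm_pow (a : σ → R) (i : σ) (k : ℕ) :
    pderiv i (linearForm a ^ k) = (k * a i) • linearForm a ^ (k - 1) := by
  rw [Derivation.leibniz_pow, pderiv_linearForm]
  simp only [smul_eq_C_mul, smul_eq_mul, nsmul_eq_mul, map_mul, map_natCast]
  ring

theorem laplacian_linearForm_pow (a : σ → R) (k : ℕ) :
    laplacian σ R (linearForm a ^ k) =
      ((k.descFactorial 2 : R) * (a ⬝ᵥ a)) • linearForm a ^ (k - 2) := by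
  rw [laplacian_apply, dotProduct, Finset.mul_sum, Finset.sum_smul]
  refine Finset.sum_congr rfl fun i _ => ?_
  rw [pderiv_linearForm_pow, Derivation.map_smul, pderiv_linearForm_pow, smul_smul, Nat.sub_sub]
  simp only [Nat.descFactorial, Nat.cast_mul, Nat.cast_one]
  congr 1
  simp only [Nat.sub_zero, mul_one]
  ring

theorem laplacian_pow_linearForm_pow (a : σ → R) (j k : ℕ) :
    (laplacian σ R ^ j) (linearForm a ^ k) =
      ((k.descFactorial (2 * j) : R) * (a ⬝ᵥ a) ^ j) • linearForm a ^ (k - 2 * j) := by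
  induction j with
  | zero => simp
  | succ j ih =>
    rw [pow_succ', Module.End.mul_apply, ih, map_smul, laplacian_linearForm_pow, smul_smul,
      Nat.sub_sub, Nat.mul_succ]
    congr 1
    simp only [Nat.descFactorial, Nat.sub_zero, Nat.sub_sub]
    push_cast
    ring

theorem eq_sum_monomial_of_isHomogeneous [DecidableEq σ] {k : ℕ} {p : MvPolynomial σ R}
    (hp : p.IsHomogeneous k) :
    p = ∑ d ∈ Finset.univ.finsuppAntidiag k, monomial d (coeff d p) := by
  conv_lhs => rw [p.as_sum]
  refine Finset.sum_subset (fun d hd => ?_) fun d _ hd => ?_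
  · rw [Finset.mem_finsuppAntidiag, ← Finsupp.degree_eq_sum]
    exact ⟨by_contra fun h => mem_support_iff.1 hd (hp.coeff_eq_zero h), Finset.subset_univ _⟩
  · rw [notMem_support_iff.1 hd, monomial_zero]

end CommSemiring

section Field

variable {σ K : Type*} [Fintype σ] [Field K]

theorem mem_span_range_linearForm_pow [CharZero K] {k : ℕ} {p : MvPolynomial σ K}
    (hp : p.IsHomogeneous k) : p ∈ span K (Set.range fun a : σ → K => linearForm a ^ k) := by
  classical
  by_contra hmem
  obtain ⟨φ, hφp, hφ⟩ := Submodule.exists_le_ker_of_notMem hmem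
  have hφ_sum {q : MvPolynomial σ K} (hq : q.IsHomogeneous k) :
      φ q = ∑ d ∈ Finset.univ.finsuppAntidiag k, coeff d q * φ (monomial d 1) := by
    conv_lhs => rw [eq_sum_monomial_of_isHomogeneous hq, map_sum]
    refine Finset.sum_congr rfl fun d _ => ?_
    rw [← mul_one (coeff d q), ← smul_eq_mul, ← smul_monomial, map_smul, smul_eq_mul, smul_eq_mul,
      mul_one]
  -- As a function of `a`, the value `φ ((∑ aᵢ Xᵢ) ^ k)` is a polynomial.
  have hzero : ∑ d ∈ Finset.univ.finsuppAntidiag k,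
      monomial d (d.multinomial * φ (monomial d 1) : K) = 0 := by
    refine MvPolynomial.funext fun a => ?_
    rw [map_zero, ← LinearMap.mem_ker.1 (hφ (subset_span ⟨a, rfl⟩)),
      hφ_sum (isHomogeneous_linearForm_pow a k), map_sum]
    refine Finset.sum_congr rfl fun d hd => ?_
    rw [Finset.mem_finsuppAntidiag] at hd
    rw [linearForm, coeff_linearCombination_X_pow_of_fintype, if_pos, eval_monomial]
    · ring
    · rw [Finsupp.sum_fintype _ _ fun _ => rfl, hd.1]
  refine hφp ((hφ_sum hp).trans (Finset.sum_eq_zero fun d hd => ?_))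
  have hcoeff := congrArg (coeff d) hzero
  rw [coeff_sum, Finset.sum_eq_single d (fun e _ he => by rw [coeff_monomial, if_neg he])
    (absurd hd), coeff_monomial, if_pos rfl, coeff_zero] at hcoeff
  rw [(mul_eq_zero.1 hcoeff).resolve_left (Nat.cast_ne_zero.2 (Nat.multinomial_pos _ _).ne'),
    mul_zero]

theorem finrank_homogeneousSubmodule (k : ℕ) :
    Module.finrank K (homogeneousSubmodule σ K k) = (Fintype.card σ + k - 1).choose k := by
  classical
  have hspan : homogeneousSubmodule σ K k =
      span K (Set.range fun d : Finset.finsuppAntidiag (Finset.univ : Finset σ) k =>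
        monomial d.1 (1 : K)) := by
    rw [homogeneousSubmodule_eq_finsupp_supported, AddMonoidAlgebra.supported_eq_span_single]
    congr 1
    ext p
    simp only [Set.mem_image, Set.mem_ofPred_eq, Set.mem_range, Subtype.exists,
      Finset.mem_finsuppAntidiag, Finsupp.degree_eq_sum, Finset.subset_univ, and_true, exists_prop]
    rfl
  rw [hspan, finrank_span_eq_card, Fintype.card_coe, Finset.card_finsuppAntidiag_nat_eq_choose,
    Finset.card_univ]
  exact (basisMonomials σ K).linearIndependent.comp _ Subtype.val_injective

instance finite_harmonicSubmodule (k : ℕ) : Module.Finite K (harmonicSubmodule σ K k) :=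
  Submodule.finiteDimensional_of_le
    (inf_le_left : harmonicSubmodule σ K k ≤ homogeneousSubmodule σ K k)

theorem finrank_homogeneousSubmodule_le (k : ℕ) :
    Module.finrank K (homogeneousSubmodule σ K (k + 2)) ≤
      Module.finrank K (harmonicSubmodule σ K (k + 2)) +
        Module.finrank K (homogeneousSubmodule σ K k) := by
  let Δ : homogeneousSubmodule σ K (k + 2) →ₗ[K] homogeneousSubmodule σ K k :=
    (laplacian σ K).restrict fun _ hp => isHomogeneous_laplacian hp
  have hker : (LinearMap.ker Δ).map (homogeneousSubmodule σ K (k + 2)).subtype ≤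
      harmonicSubmodule σ K (k + 2) := by
    rintro _ ⟨p, hp, rfl⟩
    exact ⟨p.2, congrArg Subtype.val (LinearMap.mem_ker.1 hp)⟩
  rw [← LinearMap.finrank_range_add_finrank_ker Δ, add_comm]
  gcongr
  · exact (Submodule.finrank_map_subtype_eq _ _).symm.trans_le (Submodule.finrank_mono hker)
  · exact Submodule.finrank_le _

theorem two_mul_add_one_le_finrank_harmonicSubmodule {k : ℕ} (hk : k ≠ 0) :
    2 * k + 1 ≤ Module.finrank K (harmonicSubmodule (Fin 3) K k) := by
  obtain rfl | ⟨m, rfl⟩ : k = 1 ∨ ∃ m, k = m + 2 :=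
    (by omega : k = 1 ∨ 2 ≤ k).imp_right fun h => ⟨k - 2, by omega⟩
  · have hlinear : harmonicSubmodule (Fin 3) K 1 = homogeneousSubmodule (Fin 3) K 1 := by
      refine inf_eq_left.2 fun p hp => ?_
      rw [LinearMap.mem_ker, laplacian_apply]
      refine Finset.sum_eq_zero fun i _ => ?_
      obtain ⟨c, hc⟩ : ∃ c, pderiv i p = C c := ⟨_, totalDegree_eq_zero_iff_eq_C.1
        ((totalDegree_zero_iff_isHomogeneous _).2 (IsHomogeneous.pderiv hp))⟩
      rw [hc, pderiv_C]
    rw [hlinear, finrank_homogeneousSubmodule]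
    rfl
  · have hle := finrank_homogeneousSubmodule_le (σ := Fin 3) (K := K) m
    have hchoose : (m + 4).choose 2 = (m + 2).choose 2 + (2 * m + 5) := by
      rw [Nat.choose_succ_succ' (m + 3) 1, Nat.choose_succ_succ' (m + 2) 1, Nat.choose_one_right,
        Nat.choose_one_right]
      ring
    rw [finrank_homogeneousSubmodule, finrank_homogeneousSubmodule, Fintype.card_fin,
      show 3 + (m + 2) - 1 = (m + 2) + 2 by omega, show 3 + m - 1 = m + 2 by omega,
      Nat.choose_symm_add, Nat.choose_symm_add, hchoose] at hle
    omega

/-- Taking the divergence of `|X|² ∇f = k f X` gives `2kf = k(n + k)f`. -/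
theorem eq_zero_of_sum_X_sq_mul_pderiv_eq [CharZero K] {k : ℕ} {f : MvPolynomial σ K}
    (hf : f ∈ harmonicSubmodule σ K k)
    (hgrad : ∀ i, (∑ j, X j ^ 2) * pderiv i f = (k : MvPolynomial σ K) * (X i * f))
    (hk : k * (Fintype.card σ + k - 2) ≠ 0) : f = 0 := by
  classical
  have euler : ∑ i, X i * pderiv i f = (k : MvPolynomial σ K) * f := by
    rw [hf.1.sum_X_mul_pderiv, nsmul_eq_mul]
  have hharm : ∑ i, pderiv i (pderiv i f) = 0 := by rw [← laplacian_apply]; exact hf.2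
  have hsq (i : σ) : pderiv i (∑ j, X j ^ 2 : MvPolynomial σ K) = 2 * X i := by
    simp [Derivation.leibniz_pow, pderiv_X, Pi.single_apply]
  have hdiv_left : ∑ i, pderiv i ((∑ j, X j ^ 2) * pderiv i f) =
      2 * ((k : MvPolynomial σ K) * f) := by
    simp only [Derivation.leibniz, hsq, smul_eq_mul, Finset.sum_add_distrib, ← Finset.mul_sum,
      hharm, mul_zero, zero_add, ← euler]
    rw [Finset.mul_sum]
    exact Finset.sum_congr rfl fun i _ => by ring
  have hdiv_right : ∑ i, pderiv i ((k : MvPolynomial σ K) * (X i * f)) =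
      ((k * (Fintype.card σ + k) : ℕ) : MvPolynomial σ K) * f := by
    simp only [← nsmul_eq_mul, map_nsmul, Derivation.leibniz, pderiv_X_self, smul_eq_mul, mul_one,
      ← Finset.smul_sum, Finset.sum_add_distrib, euler, Finset.sum_const, Finset.card_univ]
    simp only [nsmul_eq_mul, Nat.cast_mul, Nat.cast_add]
    ring
  have hmul : ((k * (Fintype.card σ + k - 2) : ℕ) : MvPolynomial σ K) * f = 0 := by
    have h2 : 2 ≤ Fintype.card σ + k := by
      by_contra h
      simp [show Fintype.card σ + k - 2 = 0 by omega] at hk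
    push_cast [Nat.cast_sub h2] at hdiv_right ⊢
    linear_combination
      hdiv_left - hdiv_right - Finset.sum_congr rfl fun i _ => congrArg (pderiv i) (hgrad i)
  exact (mul_eq_zero.1 hmul).resolve_left (Nat.cast_ne_zero.2 hk)

end Field

/-- The hypothesis says that the surface gradient of `f` on the unit sphere vanishes. -/
theorem eq_zero_of_forall_norm_eq_one_eval_pderiv_eq {σ : Type*} [Fintype σ] {k : ℕ}
    {f : MvPolynomial σ ℝ} (hf : f ∈ harmonicSubmodule σ ℝ k)
    (hgrad : ∀ y : EuclideanSpace ℝ σ, ‖y‖ = 1 → ∀ i,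
      eval y.ofLp (pderiv i f) = k * eval y.ofLp f * y i)
    (hk : k * (Fintype.card σ + k - 2) ≠ 0) : f = 0 := by
  refine eq_zero_of_sum_X_sq_mul_pderiv_eq hf (fun i => MvPolynomial.funext fun y => ?_) hk
  simp only [map_mul, map_sum, map_pow, eval_X, map_natCast]
  rcases eq_or_ne y 0 with rfl | hy
  · simp
  set z : EuclideanSpace ℝ σ := WithLp.toLp 2 y
  have hz : ‖z‖ ≠ 0 := norm_ne_zero_iff.2 (by simpa [z] using hy)
  have hy_smul : y = ‖z‖ • (‖z‖⁻¹ • z).ofLp := by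
    rw [WithLp.ofLp_smul, smul_smul, mul_inv_cancel₀ hz, one_smul]
  have hgrad_z := hgrad (‖z‖⁻¹ • z) (norm_smul_inv_norm (norm_ne_zero_iff.1 hz)) i
  have hsum : ∑ j, y j ^ 2 = ‖z‖ ^ 2 := (EuclideanSpace.real_norm_sq_eq z).symm
  rw [hsum, hy_smul, eval_smul_of_isHomogeneous hf.1, eval_smul_of_isHomogeneous hf.1.pderiv,
    hgrad_z, Pi.smul_apply, smul_eq_mul]
  obtain ⟨m, rfl⟩ := Nat.exists_eq_succ_of_ne_zero (left_ne_zero_of_mul hk)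
  simp only [Nat.succ_sub_one, pow_succ, Nat.succ_eq_add_one]
  ring

end Polynomial

/-! ### The cross product and the common line -/

/-- The cross product of `ℝ³`, transported from `Fin 3 → ℝ` to the Euclidean space `V`. -/
def cross : V →ₗ[ℝ] V →ₗ[ℝ] V :=
  let e := WithLp.linearEquiv 2 ℝ (Fin 3 → ℝ)
  (crossProduct.compl₁₂ e.toLinearMap e.toLinearMap).compr₂ e.symm.toLinearMap

local notation:74 x:74 "×₃" y:75 => cross x y

theorem ofLp_cross (x y : V) : (x ×₃ y).ofLp = crossProduct x.ofLp y.ofLp := rfl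

theorem inner_eq_dotProduct (x y : V) : ⟪x, y⟫ = x.ofLp ⬝ᵥ y.ofLp := by
  rw [EuclideanSpace.inner_eq_star_dotProduct, star_trivial, dotProduct_comm]

theorem cross_self_eq_zero (x : V) : x ×₃ x = 0 :=
  WithLp.ofLp_injective 2 (cross_self x.ofLp)

theorem neg_cross_eq (x y : V) : -(x ×₃ y) = y ×₃ x :=
  WithLp.ofLp_injective 2 (cross_anticomm x.ofLp y.ofLp)

theorem inner_left_cross (x y : V) : ⟪x, x ×₃ y⟫ = 0 := by
  rw [inner_eq_dotProduct, ofLp_cross, dot_self_cross]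

theorem inner_right_cross (x y : V) : ⟪y, x ×₃ y⟫ = 0 := by
  rw [inner_eq_dotProduct, ofLp_cross, dot_cross_self]

theorem cross_cross_eq (x y z : V) : x ×₃ (y ×₃ z) = ⟪x, z⟫ • y - ⟪x, y⟫ • z :=
  WithLp.ofLp_injective 2 (by
    rw [inner_eq_dotProduct, inner_eq_dotProduct, dotProduct_comm x.ofLp y.ofLp]
    exact cross_cross_eq_smul_sub_smul' x.ofLp y.ofLp z.ofLp)

theorem inner_cross_cross (x y a b : V) : ⟪x ×₃ y, a ×₃ b⟫ = ⟪x, a⟫ * ⟪y, b⟫ - ⟪x, b⟫ * ⟪y, a⟫ := by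
  simp only [inner_eq_dotProduct, ofLp_cross, cross_dot_cross]

theorem norm_cross_sq (x y : V) : ‖x ×₃ y‖ ^ 2 = ‖x‖ ^ 2 * ‖y‖ ^ 2 - ⟪x, y⟫ ^ 2 := by
  simp only [← real_inner_self_eq_norm_sq, inner_cross_cross, real_inner_comm x y, ← sq]

theorem continuous_cross : Continuous fun p : V × V => p.1 ×₃ p.2 :=
  (cross.mkContinuous₂ 1 fun x y => by
    refine abs_le_of_sq_le_sq' ?_ (by positivity) |>.2
    rw [norm_cross_sq, one_mul, mul_pow]
    nlinarith [sq_nonneg ⟪x, y⟫]).continuous₂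

theorem mem_plane {x : S2} {v : V} : v ∈ plane x ↔ ⟪(x : V), v⟫ = 0 :=
  Submodule.mem_orthogonal_singleton_iff_inner_right

/-- The orthogonal projection onto the line spanned by `x ×₃ y`; for `x ≠ ±y` on the sphere this is
the common-lines kernel, and for `x = ±y` it is `0`. -/
def commonLineProj (x y : V) : V →L[ℝ] V := (ℝ ∙ (x ×₃ y)).starProjection

theorem commonLineProj_apply (x y v : V) :
    commonLineProj x y v = (⟪x ×₃ y, v⟫ / ‖x ×₃ y‖ ^ 2) • (x ×₃ y) := by
  rw [commonLineProj, starProjection_singleton]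
  rfl

theorem commonLineProj_comm (x y : V) : commonLineProj x y = commonLineProj y x := by
  ext1 v
  rw [commonLineProj_apply, commonLineProj_apply, ← neg_cross_eq, inner_neg_left, norm_neg, neg_div,
    neg_smul_neg]

theorem cline_eq_span_cross (x y : S2) (h : (x : V) ×₃ y ≠ 0) : cline x y = ℝ ∙ ((x : V) ×₃ y) := by
  refine le_antisymm (fun z ⟨hxz, hyz⟩ => mem_span_singleton.2 ?_)
    ((span_singleton_le_iff_mem _ _).2
      ⟨mem_plane.2 (inner_left_cross _ _), mem_plane.2 (inner_right_cross _ _)⟩)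
  set w := (x : V) ×₃ y
  have hw : ‖w‖ ^ 2 ≠ 0 := pow_ne_zero _ (norm_ne_zero_iff.2 h)
  have hzw : z ×₃ w = 0 := by
    rw [cross_cross_eq, real_inner_comm, mem_plane.1 hyz, real_inner_comm, mem_plane.1 hxz,
      zero_smul, zero_smul, sub_zero]
  have hparallel : ⟪w, z⟫ • w = ‖w‖ ^ 2 • z := by
    rw [← sub_eq_zero, ← real_inner_self_eq_norm_sq, ← cross_cross_eq, ← neg_cross_eq z, hzw,
      neg_zero, map_zero]
  exact ⟨⟪w, z⟫ / ‖w‖ ^ 2, by rw [div_eq_inv_mul, mul_smul, hparallel, inv_smul_smul₀ hw]⟩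

theorem Cker_eq_commonLineProj (x y : S2) (h : (x : V) ×₃ y ≠ 0) (v : V) :
    Cker x y v = commonLineProj x y v := by
  change (cline x y).starProjection v = (ℝ ∙ ((x : V) ×₃ y)).starProjection v
  congr 2
  exact cline_eq_span_cross x y h

theorem inner_commonLineProj_comm (x y v w : V) :
    ⟪commonLineProj x y v, w⟫ = ⟪v, commonLineProj y x w⟫ := by
  rw [commonLineProj_comm y x, commonLineProj, inner_starProjection_left_eq_right]

theorem norm_commonLineProj_apply_le (x y v : V) : ‖commonLineProj x y v‖ ≤ ‖v‖ :=
  norm_starProjection_apply_le _ _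

theorem sum_norm_commonLineProj_sq_le_one {ι : Type*} [Fintype ι] (b : OrthonormalBasis ι ℝ V)
    (x y : V) : ∑ i, ‖commonLineProj x y (b i)‖ ^ 2 ≤ 1 := by
  have hsq (i : ι) : ‖commonLineProj x y (b i)‖ ^ 2 = ⟪x ×₃ y, b i⟫ ^ 2 / ‖x ×₃ y‖ ^ 2 := by
    rw [commonLineProj_apply, norm_smul, norm_div, mul_pow, div_pow, norm_pow, norm_norm,
      Real.norm_eq_abs, sq_abs]
    rcases eq_or_ne ‖x ×₃ y‖ 0 with h | h
    · simp [h]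
    · field_simp
  simp only [hsq, ← Finset.sum_div, b.sum_sq_inner_left]
  exact div_self_le_one _

theorem measurable_commonLineProj :
    Measurable fun p : (V × V) × V => commonLineProj p.1.1 p.1.2 p.2 := by
  have hcross : Measurable fun p : (V × V) × V => p.1.1 ×₃ p.1.2 :=
    (continuous_cross.comp continuous_fst).measurable
  simp only [commonLineProj_apply]
  exact ((hcross.inner measurable_snd).div (hcross.norm.pow_const 2)).smul hcross

section Frame

variable {x e : V}

theorem cross_cross_of_inner_eq_zero (hx : ‖x‖ = 1) (hxe : ⟪x, e⟫ = 0) : x ×₃ (x ×₃ e) = -e := by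
  rw [cross_cross_eq, hxe, real_inner_self_eq_norm_sq, hx, one_pow, one_smul, zero_smul, zero_sub]

theorem norm_cross_of_inner_eq_zero (hx : ‖x‖ = 1) (he : ‖e‖ = 1) (hxe : ⟪x, e⟫ = 0) :
    ‖x ×₃ e‖ = 1 := by
  rw [← sq_eq_sq₀ (norm_nonneg _) zero_le_one, norm_cross_sq, hx, he, hxe]
  norm_num

theorem eq_sum_inner_smul_frame (hx : ‖x‖ = 1) (he : ‖e‖ = 1) (hxe : ⟪x, e⟫ = 0) (y : V) :
    y = ⟪x, y⟫ • x + ⟪e, y⟫ • e + ⟪x ×₃ e, y⟫ • (x ×₃ e) := by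
  have hny : (x ×₃ e) ×₃ y = ⟪x, y⟫ • e - ⟪e, y⟫ • x := by
    rw [← neg_cross_eq, cross_cross_eq, real_inner_comm, real_inner_comm x, neg_sub]
  have hne : (x ×₃ e) ×₃ e = -x := by
    rw [← neg_cross_eq, cross_cross_eq, real_inner_self_eq_norm_sq, real_inner_comm, hxe, he,
      one_pow, one_smul, zero_smul, sub_zero]
  have hnx : (x ×₃ e) ×₃ x = e := by
    rw [← neg_cross_eq, cross_cross_of_inner_eq_zero hx hxe, neg_neg]
  have hnny := cross_cross_eq (x ×₃ e) (x ×₃ e) y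
  rw [hny, map_sub, map_smul, map_smul, hne, hnx, real_inner_self_eq_norm_sq,
    norm_cross_of_inner_eq_zero hx he hxe, one_pow, one_smul, eq_sub_iff_add_eq] at hnny
  rw [← hnny]
  module

theorem cross_eq_frame (hx : ‖x‖ = 1) (he : ‖e‖ = 1) (hxe : ⟪x, e⟫ = 0) (y : V) :
    x ×₃ y = ⟪e, y⟫ • (x ×₃ e) - ⟪x ×₃ e, y⟫ • e := by
  conv_lhs => rw [eq_sum_inner_smul_frame hx he hxe y]
  rw [map_add, map_add, map_smul, map_smul, map_smul, cross_self_eq_zero,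
    cross_cross_of_inner_eq_zero hx hxe]
  module

theorem norm_sq_eq_frame (hx : ‖x‖ = 1) (he : ‖e‖ = 1) (hxe : ⟪x, e⟫ = 0) (y : V) :
    ‖y‖ ^ 2 = ⟪x, y⟫ ^ 2 + ⟪e, y⟫ ^ 2 + ⟪x ×₃ e, y⟫ ^ 2 := by
  rw [← real_inner_self_eq_norm_sq]
  conv_lhs => rw [eq_sum_inner_smul_frame hx he hxe y]
  simp only [inner_add_left, real_inner_smul_left, sq]
  rw [← eq_sum_inner_smul_frame hx he hxe y]

end Frame

/-! ### Rotation-invariant measures on the sphere -/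

/-- Invariance of a measure on the sphere under all linear isometries of `V`. -/
def IsRotationInvariant (μ : Measure S2) : Prop :=
  ∀ g : V ≃ₗᵢ[ℝ] V, MeasurePreserving (sphereMap g) μ μ

/-- The reflection in the plane orthogonal to `b`; every use of rotation invariance goes through
these maps. -/
def reflect (b : V) : V ≃ₗᵢ[ℝ] V := (ℝ ∙ b)ᗮ.reflection

theorem coe_sphereMap (g : V ≃ₗᵢ[ℝ] V) (y : S2) : (sphereMap g y : V) = g y := rfl

theorem inner_reflect (a b y : V) : ⟪a, reflect b y⟫ = ⟪reflect b a, y⟫ := by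
  rw [← LinearIsometryEquiv.inner_map_map (reflect b) a, reflect, reflection_reflection]

theorem reflect_of_inner_eq_zero {a b : V} (h : ⟪b, a⟫ = 0) : reflect b a = a :=
  reflection_mem_subspace_eq_self (mem_orthogonal_singleton_iff_inner_right.2 h)

theorem inner_reflect_self (b y : V) : ⟪b, reflect b y⟫ = -⟪b, y⟫ := by
  rw [inner_reflect, reflect, reflection_orthogonalComplement_singleton_eq_neg, inner_neg_left]

theorem inner_reflect_of_inner_eq_zero {a b : V} (h : ⟪b, a⟫ = 0) (y : V) :
    ⟪a, reflect b y⟫ = ⟪a, y⟫ := by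
  rw [inner_reflect, reflect_of_inner_eq_zero h]

theorem continuous_sphereMap (g : V ≃ₗᵢ[ℝ] V) : Continuous (sphereMap g) :=
  (g.continuous.comp continuous_subtype_val).subtype_mk _

theorem measurableEmbedding_sphereMap (g : V ≃ₗᵢ[ℝ] V) : MeasurableEmbedding (sphereMap g) :=
  ((continuous_sphereMap g).isClosedEmbedding fun _ _ h =>
    Subtype.ext (g.injective (congrArg Subtype.val h))).measurableEmbedding

theorem integral_eq_zero_of_odd_reflect {μ : Measure S2} {F : S2 → ℝ} (hμ : IsRotationInvariant μ)
    (b : V) (hF : ∀ y, F (sphereMap (reflect b) y) = -F y) : ∫ y, F y ∂μ = 0 := by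
  have h := (hμ (reflect b)).integral_comp (measurableEmbedding_sphereMap _) F
  simp only [hF, integral_neg] at h
  linarith

theorem isOpenPosMeasure_of_isRotationInvariant {μ : Measure S2} [NeZero μ]
    (hμ : IsRotationInvariant μ) : μ.IsOpenPosMeasure := by
  refine ⟨fun U hU ⟨y, hy⟩ hU0 => NeZero.ne μ (Measure.measure_univ_eq_zero.1 ?_)⟩
  let g (x : S2) : S2 → S2 := sphereMap (reflect ((x : V) - y))
  have hg (x : S2) : g x x = y :=
    Subtype.ext (reflection_sub ((norm_eq_of_mem_sphere x).trans (norm_eq_of_mem_sphere y).symm))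
  obtain ⟨t, ht⟩ := isCompact_univ.elim_finite_subcover (fun x => g x ⁻¹' U)
    (fun _ => hU.preimage (continuous_sphereMap _))
    fun x _ => Set.mem_iUnion.2 ⟨x, Set.mem_preimage.2 ((hg x).symm ▸ hy)⟩
  refine measure_mono_null ht ((measure_biUnion_null_iff t.countable_toSet).2 fun x _ => ?_)
  rw [(hμ _).measure_preimage hU.measurableSet.nullMeasurableSet, hU0]

theorem integrable_of_continuous {μ : Measure S2} [IsFiniteMeasure μ] {E : Type*}
    [NormedAddCommGroup E] {F : S2 → E} (hF : Continuous F) : Integrable F μ :=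
  hF.integrable_of_hasCompactSupport (.of_compactSpace F)

theorem exists_norm_eq_one_inner_eq_zero (x a : V) :
    ∃ n : V, ‖n‖ = 1 ∧ ⟪x, n⟫ = 0 ∧ ⟪a, n⟫ = 0 := by
  classical
  have hrank : Module.finrank ℝ (span ℝ {x, a}) ≤ 2 := by
    have h := finrank_span_finset_le_card (R := ℝ) ({x, a} : Finset V)
    rw [Finset.coe_pair] at h
    exact h.trans Finset.card_le_two
  have hsum := (span ℝ {x, a}).finrank_add_finrank_orthogonal
  rw [finrank_euclideanSpace_fin] at hsum
  have hne : (span ℝ {x, a})ᗮ ≠ ⊥ := fun h => by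
    rw [h, finrank_bot] at hsum
    omega
  obtain ⟨n, hn, hn0⟩ := exists_mem_ne_zero_of_ne_bot hne
  have horth {b : V} (hb : b ∈ ({x, a} : Set V)) : ⟪b, ‖n‖⁻¹ • n⟫ = 0 := by
    rw [inner_smul_right, hn b (subset_span hb), mul_zero]
  exact ⟨‖n‖⁻¹ • n, norm_smul_inv_norm hn0, horth (Set.mem_insert x _),
    horth (Set.mem_insert_of_mem x rfl)⟩

theorem exists_norm_eq_one_smul_eq (a : V) : ∃ u : V, ‖u‖ = 1 ∧ ‖a‖ • u = a := by
  rcases eq_or_ne a 0 with rfl | ha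
  · obtain ⟨u, hu, -⟩ := exists_norm_eq_one_inner_eq_zero 0 0
    exact ⟨u, hu, by simp⟩
  · exact ⟨‖a‖⁻¹ • a, norm_smul_inv_norm ha, smul_inv_smul₀ (norm_ne_zero_iff.2 ha) a⟩

theorem exists_frame_adapted {x : V} (hx : ‖x‖ = 1) (a : V) :
    ∃ e : V, ‖e‖ = 1 ∧ ⟪x, e⟫ = 0 ∧ ⟪x ×₃ e, a⟫ = 0 := by
  obtain ⟨n, hn, hxn, han⟩ := exists_norm_eq_one_inner_eq_zero x a
  rw [real_inner_comm] at hxn han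
  refine ⟨n ×₃ x, norm_cross_of_inner_eq_zero hn hx hxn, inner_right_cross n x, ?_⟩
  rwa [cross_cross_eq, real_inner_self_eq_norm_sq, hx, real_inner_comm n x, hxn, one_pow,
    one_smul, zero_smul, sub_zero]

section Moments

theorem mul_add_mul_pow_mul_sub_eq_sum {R : Type*} [CommRing R] (w u v t : R) (j : ℕ) :
    w * ((u + t * v) ^ (j + 1) * (v - t * u)) =
      ∑ i ∈ Finset.range (j + 2), (j + 1).choose i *
        (w * (u ^ (j + 2 - (i + 1)) * v ^ (i + 1)) * t ^ i -
          w * (u ^ (j + 2 - i) * v ^ i) * t ^ (i + 1)) := by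
  rw [add_comm u, add_pow, Finset.sum_mul, Finset.mul_sum]
  refine Finset.sum_congr rfl fun i hi => ?_
  have hi' := Finset.mem_range.1 hi
  rw [show j + 2 - i = (j + 1 - i) + 1 by omega, show j + 2 - (i + 1) = j + 1 - i by omega, mul_pow]
  ring

theorem integral_mul_pow_mul_sq_of_forall_integral_eq_zero {α : Type*} [MeasurableSpace α]
    {μ : Measure α} {w u v : α → ℝ} {j : ℕ}
    (hint : ∀ i l, i + l = j + 2 → Integrable (fun y => w y * (u y ^ i * v y ^ l)) μ)
    (hzero : ∀ t : ℝ, ∫ y, w y * ((u y + t * v y) ^ (j + 1) * (v y - t * u y)) ∂μ = 0) :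
    (j + 1) * ∫ y, w y * (u y ^ j * v y ^ 2) ∂μ = ∫ y, w y * u y ^ (j + 2) ∂μ := by
  let f (l : ℕ) (y : α) : ℝ := w y * (u y ^ (j + 2 - l) * v y ^ l)
  have hf {l : ℕ} (hl : l ≤ j + 2) : Integrable (f l) μ := hint _ _ (by omega)
  have hpoly : ∑ i ∈ Finset.range (j + 2), Polynomial.C ((j + 1).choose i : ℝ) *
      (Polynomial.C (∫ y, f (i + 1) y ∂μ) * Polynomial.X ^ i -
        Polynomial.C (∫ y, f i y ∂μ) * Polynomial.X ^ (i + 1)) = 0 := by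
    refine Polynomial.funext fun t => ?_
    have hsub {i : ℕ} (hi : i ∈ Finset.range (j + 2)) :
        Integrable (f (i + 1) · * t ^ i) μ ∧ Integrable (f i · * t ^ (i + 1)) μ :=
      have hi' := Finset.mem_range.1 hi
      ⟨(hf hi').mul_const _, (hf hi'.le).mul_const _⟩
    have hint' {i : ℕ} (hi : i ∈ Finset.range (j + 2)) : Integrable
        (fun y => (j + 1).choose i * (f (i + 1) y * t ^ i - f i y * t ^ (i + 1))) μ :=
      ((hsub hi).1.sub (hsub hi).2).const_mul _
    rw [Polynomial.eval_zero, ← hzero t]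
    simp only [Polynomial.eval_finsetSum, Polynomial.eval_mul, Polynomial.eval_sub,
      Polynomial.eval_pow, Polynomial.eval_C, Polynomial.eval_X,
      mul_add_mul_pow_mul_sub_eq_sum]
    rw [integral_finsetSum _ fun i hi => hint' hi]
    refine Finset.sum_congr rfl fun i hi => ?_
    rw [integral_const_mul, ← integral_mul_const, ← integral_mul_const,
      ← integral_sub (hsub hi).1 (hsub hi).2]
  have hcoeff := congrArg (Polynomial.coeff · 1) hpoly
  simp only [Polynomial.finsetSum_coeff, Polynomial.coeff_C_mul, Polynomial.coeff_sub,
    Polynomial.coeff_X_pow, Polynomial.coeff_zero] at hcoeff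
  rw [Finset.sum_range_succ', Finset.sum_range_succ'] at hcoeff
  simpa [f, add_neg_eq_zero] using hcoeff

variable {μ : Measure S2} {x e₁ e₂ : V}

/-- Integration by parts along the rotations in the plane of `e₁` and `e₂`, in integrated form:
`u + tv` is fixed by the reflection that reverses `v - tu`. -/
theorem integral_mul_inner_pow_mul_inner_sq (hμ : IsRotationInvariant μ) (h₁ : ‖e₁‖ = 1)
    (h₂ : ‖e₂‖ = 1) (h₁₂ : ⟪e₁, e₂⟫ = 0) (hx₁ : ⟪x, e₁⟫ = 0) (hx₂ : ⟪x, e₂⟫ = 0) (φ : ℝ → ℝ) (j : ℕ)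
    (hint : ∀ i l, i + l = j + 2 →
      Integrable (fun y : S2 => φ ⟪x, y⟫ * (⟪e₁, y⟫ ^ i * ⟪e₂, y⟫ ^ l)) μ) :
    (j + 1) * ∫ y : S2, φ ⟪x, y⟫ * (⟪e₁, y⟫ ^ j * ⟪e₂, y⟫ ^ 2) ∂μ =
      ∫ y : S2, φ ⟪x, y⟫ * ⟪e₁, y⟫ ^ (j + 2) ∂μ := by
  refine integral_mul_pow_mul_sq_of_forall_integral_eq_zero hint fun t => ?_
  refine integral_eq_zero_of_odd_reflect hμ (e₂ - t • e₁) fun y => ?_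
  have hfix : ⟪e₂ - t • e₁, e₁ + t • e₂⟫ = 0 := by
    simp only [inner_sub_left, inner_add_right, real_inner_smul_left, inner_smul_right,
      real_inner_self_eq_norm_sq, real_inner_comm e₁ e₂, h₁₂, h₁, h₂]
    ring
  have hfix_x : ⟪e₂ - t • e₁, x⟫ = 0 := by
    rw [real_inner_comm, inner_sub_right, inner_smul_right, hx₁, hx₂, mul_zero, sub_zero]
  have hplus (y : V) : ⟪e₁, y⟫ + t * ⟪e₂, y⟫ = ⟪e₁ + t • e₂, y⟫ := by
    rw [inner_add_left, real_inner_smul_left]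
  have hminus (y : V) : ⟪e₂, y⟫ - t * ⟪e₁, y⟫ = ⟪e₂ - t • e₁, y⟫ := by
    rw [inner_sub_left, real_inner_smul_left]
  rw [coe_sphereMap, hplus, hplus, hminus, hminus, inner_reflect_of_inner_eq_zero hfix,
    inner_reflect_of_inner_eq_zero hfix_x, inner_reflect_self]
  ring

theorem integral_inner_pow_mul_eq_zero_of_odd_reflect (hμ : IsRotationInvariant μ) {a b : V}
    (h : ⟪b, a⟫ = 0) (l : ℕ) {F : S2 → ℝ} (hF : ∀ y, F (sphereMap (reflect b) y) = -F y) :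
    ∫ y : S2, ⟪a, y⟫ ^ l * F y ∂μ = 0 :=
  integral_eq_zero_of_odd_reflect hμ b fun y => by
    rw [coe_sphereMap, inner_reflect_of_inner_eq_zero h, hF, mul_neg]

theorem integral_inner_pow_mul_inner_eq_zero (hμ : IsRotationInvariant μ) {a b : V}
    (h : ⟪b, a⟫ = 0) (l : ℕ) : ∫ y : S2, ⟪a, y⟫ ^ l * ⟪b, y⟫ ∂μ = 0 :=
  integral_inner_pow_mul_eq_zero_of_odd_reflect hμ h l fun y => inner_reflect_self b y

variable [IsProbabilityMeasure μ]

theorem integral_inner_pow_even_of_norm_eq_one (hμ : IsRotationInvariant μ) {u : V}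
    (hu : ‖u‖ = 1) (m : ℕ) : ∫ y : S2, ⟪u, y⟫ ^ (2 * m) ∂μ = 1 / (2 * m + 1) := by
  induction m with
  | zero => simp
  | succ m ih =>
    obtain ⟨e, he, hue, -⟩ := exists_frame_adapted hu 0
    have hn := norm_cross_of_inner_eq_zero hu he hue
    have hint (b : V) : Integrable (fun y : S2 => ⟪u, y⟫ ^ (2 * m) * ⟪b, y⟫ ^ 2) μ :=
      integrable_of_continuous (by fun_prop)
    have hparts {b : V} (hb : ‖b‖ = 1) (hub : ⟪u, b⟫ = 0) :
        (2 * m + 1) * ∫ y : S2, ⟪u, y⟫ ^ (2 * m) * ⟪b, y⟫ ^ 2 ∂μ =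
          ∫ y : S2, ⟪u, y⟫ ^ (2 * m + 2) ∂μ := by
      have h := integral_mul_inner_pow_mul_inner_sq hμ hu hb hub (inner_zero_left u)
        (inner_zero_left b) (fun _ => 1) (2 * m) fun i l _ => integrable_of_continuous (by fun_prop)
      simpa only [one_mul, Nat.cast_mul, Nat.cast_ofNat] using h
    have hsplit : ∫ y : S2, ⟪u, y⟫ ^ (2 * m) ∂μ = ∫ y : S2, ⟪u, y⟫ ^ (2 * m + 2) ∂μ +
        ∫ y : S2, ⟪u, y⟫ ^ (2 * m) * ⟪e, y⟫ ^ 2 ∂μ +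
        ∫ y : S2, ⟪u, y⟫ ^ (2 * m) * ⟪u ×₃ e, y⟫ ^ 2 ∂μ := by
      simp only [pow_add]
      rw [← integral_add (hint u) (hint e), ← integral_add ?_ (hint (u ×₃ e))]
      swap; · exact (hint u).add (hint e)
      refine integral_congr_ae (.of_forall fun y => ?_)
      have hy := norm_sq_eq_frame hu he hue y
      rw [norm_eq_of_mem_sphere] at hy
      linear_combination ⟪u, (y : V)⟫ ^ (2 * m) * hy
    have he' := hparts he hue
    have hn' := hparts hn (inner_left_cross u e)
    rw [ih, div_eq_iff (by positivity)] at hsplit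
    rw [mul_add_one, Nat.cast_add_one, eq_div_iff (by positivity)]
    linear_combination -hsplit - he' - hn'

theorem integral_inner_pow_even (hμ : IsRotationInvariant μ) (a : V) (m : ℕ) :
    ∫ y : S2, ⟪a, y⟫ ^ (2 * m) ∂μ = ‖a‖ ^ (2 * m) / (2 * m + 1) := by
  obtain ⟨u, hu, hua⟩ := exists_norm_eq_one_smul_eq a
  conv_lhs => rw [← hua]
  simp only [real_inner_smul_left, mul_pow]
  rw [integral_const_mul, integral_inner_pow_even_of_norm_eq_one hμ hu, mul_one_div]

theorem integral_inner_pow_odd_mul_inner (hμ : IsRotationInvariant μ) (a x : V) (m : ℕ) :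
    ∫ y : S2, ⟪a, y⟫ ^ (2 * m + 1) * ⟪x, y⟫ ∂μ = ⟪a, x⟫ * ‖a‖ ^ (2 * m) / (2 * m + 3) := by
  obtain ⟨u, hu, hua⟩ := exists_norm_eq_one_smul_eq a
  set x' := x - ⟪u, x⟫ • u
  have hx' : ⟪x', u⟫ = 0 := by
    rw [real_inner_comm, inner_sub_right, inner_smul_right, real_inner_self_eq_norm_sq, hu]
    ring
  have hsplit (y : S2) : ⟪a, (y : V)⟫ ^ (2 * m + 1) * ⟪x, (y : V)⟫ = ‖a‖ ^ (2 * m + 1) *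
      (⟪u, x⟫ * ⟪u, (y : V)⟫ ^ (2 * (m + 1)) + ⟪u, (y : V)⟫ ^ (2 * m + 1) * ⟪x', (y : V)⟫) := by
    conv_lhs => rw [← hua]
    rw [real_inner_smul_left, inner_sub_left, real_inner_smul_left]
    ring
  simp only [hsplit]
  rw [integral_const_mul, integral_add (integrable_of_continuous (by fun_prop))
    (integrable_of_continuous (by fun_prop)), integral_const_mul,
    integral_inner_pow_even_of_norm_eq_one hμ hu, integral_inner_pow_mul_inner_eq_zero hμ hx']
  conv_rhs => rw [← hua, real_inner_smul_left, norm_smul, norm_norm, hu]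
  push_cast
  ring

theorem ae_inner_sq_ne_one (hμ : IsRotationInvariant μ) (x : S2) :
    ∀ᵐ y : S2 ∂μ, ⟪(x : V), (y : V)⟫ ^ 2 ≠ 1 := by
  have hle (m : ℕ) : μ.real {y : S2 | ⟪(x : V), (y : V)⟫ ^ 2 = 1} ≤ 1 / (m + 1) := calc
    _ ≤ μ.real {y : S2 | 1 ≤ ⟪(x : V), (y : V)⟫ ^ (2 * m)} :=
      measureReal_mono fun y (hy : _ = _) => by rw [Set.mem_ofPred, pow_mul, hy, one_pow]
    _ ≤ ∫ y : S2, ⟪(x : V), (y : V)⟫ ^ (2 * m) ∂μ := by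
      simpa only [one_mul] using mul_meas_ge_le_integral_of_nonneg
        (.of_forall fun y => (even_two_mul m).pow_nonneg _)
        (integrable_of_continuous (by fun_prop)) 1
    _ = 1 / (2 * m + 1) := integral_inner_pow_even_of_norm_eq_one hμ (norm_eq_of_mem_sphere x) m
    _ ≤ 1 / (m + 1) := by gcongr; linarith [m.cast_nonneg (α := ℝ)]
  rw [ae_iff]
  simp only [not_not]
  exact (measureReal_eq_zero_iff).1 (le_antisymm
    (ge_of_tendsto' tendsto_one_div_add_atTop_nhds_zero_nat hle) measureReal_nonneg)

theorem ae_cross_ne_zero (hμ : IsRotationInvariant μ) (x : S2) :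
    ∀ᵐ y : S2 ∂μ, (x : V) ×₃ y ≠ 0 := by
  filter_upwards [ae_inner_sq_ne_one hμ x] with y hy h
  have hxy := norm_cross_sq (x : V) y
  rw [h, norm_eq_of_mem_sphere, norm_eq_of_mem_sphere, norm_zero] at hxy
  exact hy (by linarith)

theorem abs_pow_div_one_sub_sq_mul_le_one {z u v : ℝ} (h : z ^ 2 + u ^ 2 + v ^ 2 = 1) (p : ℕ)
    {i l : ℕ} (hil : 2 ≤ i + l) : |z ^ p / (1 - z ^ 2) * (u ^ i * v ^ l)| ≤ 1 := by
  have hz : 0 ≤ 1 - z ^ 2 := by nlinarith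
  set r := √(1 - z ^ 2)
  have hr : r ^ 2 = 1 - z ^ 2 := Real.sq_sqrt hz
  have hr0 : 0 ≤ r := Real.sqrt_nonneg _
  have hr1 : r ≤ 1 := Real.sqrt_le_one.2 (by nlinarith)
  have hz1 : |z| ≤ 1 := abs_le_one_iff_mul_self_le_one.2 (by nlinarith)
  have hu : |u| ≤ r := abs_le_of_sq_le_sq (by nlinarith) hr0
  have hv : |v| ≤ r := abs_le_of_sq_le_sq (by nlinarith) hr0
  calc |z ^ p / (1 - z ^ 2) * (u ^ i * v ^ l)|
      = |z| ^ p / r ^ 2 * (|u| ^ i * |v| ^ l) := by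
        rw [abs_mul, abs_div, abs_mul, abs_pow, abs_pow, abs_pow, ← hr, abs_of_nonneg (sq_nonneg r)]
    _ ≤ 1 / r ^ 2 * (r ^ i * r ^ l) := by gcongr; exact pow_le_one₀ (abs_nonneg _) hz1
    _ ≤ 1 / r ^ 2 * r ^ 2 := by
        rw [← pow_add]
        gcongr ?_ * ?_
        exact pow_le_pow_of_le_one hr0 hr1 hil
    _ ≤ 1 := by rw [one_div_mul_eq_div]; exact div_self_le_one _

theorem integrable_pow_div_one_sub_sq_mul {x e : V} (hx : ‖x‖ = 1) (he : ‖e‖ = 1) (hxe : ⟪x, e⟫ = 0)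
    (p : ℕ) {i l : ℕ} (hil : 2 ≤ i + l) : Integrable (fun y : S2 =>
      ⟪x, y⟫ ^ p / (1 - ⟪x, y⟫ ^ 2) * (⟪e, y⟫ ^ i * ⟪x ×₃ e, y⟫ ^ l)) μ := by
  refine .of_bound (Measurable.aestronglyMeasurable (by fun_prop)) 1 (.of_forall fun y => ?_)
  refine abs_pow_div_one_sub_sq_mul_le_one ?_ p hil
  rw [← norm_sq_eq_frame hx he hxe, norm_eq_of_mem_sphere, one_pow]

theorem integral_pow_div_one_sub_sq_mul (hμ : IsRotationInvariant μ) (x : S2) {e : V}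
    (he : ‖e‖ = 1) (hxe : ⟪(x : V), e⟫ = 0) (p j : ℕ) :
    ∫ y : S2, ⟪(x : V), y⟫ ^ p / (1 - ⟪(x : V), y⟫ ^ 2) *
        (⟪e, y⟫ ^ j * ⟪(x : V) ×₃ e, y⟫ ^ 2) ∂μ =
      (∫ y : S2, ⟪(x : V), y⟫ ^ p * ⟪e, y⟫ ^ j ∂μ) / (j + 2) := by
  have hx := norm_eq_of_mem_sphere x
  have hparts := integral_mul_inner_pow_mul_inner_sq hμ he (norm_cross_of_inner_eq_zero hx he hxe)
    (inner_right_cross _ _) hxe (inner_left_cross _ _) (fun z => z ^ p / (1 - z ^ 2)) j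
    fun i l hil => integrable_pow_div_one_sub_sq_mul hx he hxe p (by omega)
  have hsum : ∫ y : S2, ⟪(x : V), y⟫ ^ p * ⟪e, y⟫ ^ j ∂μ =
      (∫ y : S2, ⟪(x : V), y⟫ ^ p / (1 - ⟪(x : V), y⟫ ^ 2) * ⟪e, y⟫ ^ (j + 2) ∂μ) +
      ∫ y : S2, ⟪(x : V), y⟫ ^ p / (1 - ⟪(x : V), y⟫ ^ 2) *
        (⟪e, y⟫ ^ j * ⟪(x : V) ×₃ e, y⟫ ^ 2) ∂μ := by
    rw [← integral_add
      (by simpa using integrable_pow_div_one_sub_sq_mul hx he hxe p (l := 0) (by omega : 2 ≤ j + 2))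
      (integrable_pow_div_one_sub_sq_mul hx he hxe p (by omega))]
    refine integral_congr_ae ?_
    filter_upwards [ae_inner_sq_ne_one hμ x] with y hy
    have hframe := norm_sq_eq_frame hx he hxe y
    rw [norm_eq_of_mem_sphere, one_pow] at hframe
    have hy' : 1 - ⟪(x : V), (y : V)⟫ ^ 2 ≠ 0 := sub_ne_zero.2 hy.symm
    rw [pow_add, ← mul_add, ← mul_add, div_mul_eq_mul_div, eq_div_iff hy']
    linear_combination ⟪(x : V), (y : V)⟫ ^ p * ⟪e, (y : V)⟫ ^ j * hframe
  rw [eq_div_iff (by positivity)]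
  linear_combination hparts - hsum

theorem inner_smul_add_smul_pow (α β : ℝ) (x e y : V) (l : ℕ) : ⟪α • x + β • e, y⟫ ^ l =
    ∑ i ∈ Finset.range (l + 1),
      l.choose i * α ^ (l - i) * β ^ i * (⟪x, y⟫ ^ (l - i) * ⟪e, y⟫ ^ i) := by
  rw [inner_add_left, real_inner_smul_left, real_inner_smul_left, add_comm, add_pow]
  exact Finset.sum_congr rfl fun i _ => by ring

theorem integral_inner_smul_add_smul_pow_mul (α β : ℝ) (x e : V) (l q : ℕ) :
    ∫ y : S2, ⟪α • x + β • e, y⟫ ^ l * ⟪x, y⟫ ^ q ∂μ =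
      ∑ i ∈ Finset.range (l + 1), l.choose i * α ^ (l - i) * β ^ i *
        ∫ y : S2, ⟪x, y⟫ ^ (l - i + q) * ⟪e, y⟫ ^ i ∂μ := by
  simp only [inner_smul_add_smul_pow, Finset.sum_mul]
  rw [integral_finsetSum _ fun i _ => integrable_of_continuous (by fun_prop)]
  refine Finset.sum_congr rfl fun i _ => ?_
  rw [← integral_const_mul]
  exact integral_congr_ae (.of_forall fun y => by ring_nf)

/-- The weight `1 / (1 - z²)` is absorbed by scaling the component of `a` orthogonal to `x`. -/
theorem integral_inner_pow_mul_pow_div_one_sub_sq_mul (hμ : IsRotationInvariant μ) (x : S2)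
    {a e : V} (he : ‖e‖ = 1) (hxe : ⟪(x : V), e⟫ = 0) (ha : ⟪(x : V) ×₃ e, a⟫ = 0) (l q : ℕ) :
    ∫ y : S2, ⟪a, y⟫ ^ l * (⟪(x : V), y⟫ ^ q / (1 - ⟪(x : V), y⟫ ^ 2) * ⟪(x : V) ×₃ e, y⟫ ^ 2) ∂μ =
      ∫ t in (0 : ℝ)..1, t * ∫ y : S2,
        ⟪⟪(x : V), a⟫ • (x : V) + (t * ⟪e, a⟫) • e, y⟫ ^ l * ⟪(x : V), y⟫ ^ q ∂μ := by
  have hx := norm_eq_of_mem_sphere x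
  have haframe := eq_sum_inner_smul_frame hx he hxe a
  rw [ha, zero_smul, add_zero] at haframe
  set α := ⟪(x : V), a⟫
  set β := ⟪e, a⟫
  let M (i : ℕ) : ℝ := ∫ y : S2, ⟪(x : V), y⟫ ^ (l - i + q) * ⟪e, y⟫ ^ i ∂μ
  have hleft : ∫ y : S2, ⟪a, y⟫ ^ l *
        (⟪(x : V), y⟫ ^ q / (1 - ⟪(x : V), y⟫ ^ 2) * ⟪(x : V) ×₃ e, y⟫ ^ 2) ∂μ =
      ∑ i ∈ Finset.range (l + 1), l.choose i * α ^ (l - i) * β ^ i * (M i / (i + 2)) := by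
    simp only [haframe, inner_smul_add_smul_pow, Finset.sum_mul, M,
      ← integral_pow_div_one_sub_sq_mul hμ x he hxe, ← integral_const_mul]
    rw [← integral_finsetSum _ fun i _ =>
      (integrable_pow_div_one_sub_sq_mul hx he hxe (l - i + q) (by omega)).const_mul _]
    exact integral_congr_ae (.of_forall fun y => Finset.sum_congr rfl fun i _ => by ring)
  have hright (t : ℝ) : t * ∫ y : S2,
        ⟪α • (x : V) + (t * β) • e, y⟫ ^ l * ⟪(x : V), y⟫ ^ q ∂μ =
      ∑ i ∈ Finset.range (l + 1), t ^ (i + 1) * (l.choose i * α ^ (l - i) * β ^ i * M i) := by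
    rw [integral_inner_smul_add_smul_pow_mul, Finset.mul_sum]
    exact Finset.sum_congr rfl fun i _ => by ring
  simp only [hleft, hright]
  rw [intervalIntegral.integral_finsetSum fun i _ =>
    Continuous.intervalIntegrable (by fun_prop) _ _]
  refine Finset.sum_congr rfl fun i _ => ?_
  rw [intervalIntegral.integral_mul_const, integral_pow]
  push_cast
  ring

end Moments

/-- The coefficient of `S ^ j * A ^ (m - j)` in the polynomial
`∫ t in 0..1, t * ((1 - t²) A + t² S) ^ m` in `A` and `S`. -/
def mixCoeff (m j : ℕ) : ℝ :=
  m.choose j * ∫ t in (0 : ℝ)..1, t * (t ^ 2) ^ j * (1 - t ^ 2) ^ (m - j)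

theorem mixCoeff_zero (m : ℕ) : mixCoeff m 0 = 1 / (2 * m + 2) := by
  have hderiv (t : ℝ) : HasDerivAt (fun t : ℝ => -(1 - t ^ 2) ^ (m + 1) / (2 * m + 2))
      (t * (1 - t ^ 2) ^ m) t := by
    refine ((((hasDerivAt_pow 2 t).const_sub 1).fun_pow (m + 1)).fun_neg.div_const _).congr_deriv ?_
    rw [Nat.add_sub_cancel]
    push_cast
    field_simp
  simp only [mixCoeff, Nat.choose_zero_right, Nat.cast_one, one_mul, pow_zero, mul_one,
    Nat.sub_zero]
  rw [intervalIntegral.integral_eq_sub_of_hasDerivAt (fun t _ => hderiv t)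
    (Continuous.intervalIntegrable (by fun_prop) _ _)]
  simp [neg_div]

theorem integral_mul_mix_pow (A S : ℝ) (m : ℕ) :
    ∫ t in (0 : ℝ)..1, t * ((1 - t ^ 2) * A + t ^ 2 * S) ^ m =
      ∑ j ∈ Finset.range (m + 1), mixCoeff m j * (S ^ j * A ^ (m - j)) := by
  have hbinom (t : ℝ) : t * ((1 - t ^ 2) * A + t ^ 2 * S) ^ m = ∑ j ∈ Finset.range (m + 1),
      m.choose j * (S ^ j * A ^ (m - j)) * (t * (t ^ 2) ^ j * (1 - t ^ 2) ^ (m - j)) := by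
    rw [add_comm, add_pow, Finset.mul_sum]
    exact Finset.sum_congr rfl fun j _ => by rw [mul_pow, mul_pow]; ring
  simp only [hbinom]
  rw [intervalIntegral.integral_finsetSum fun i _ =>
    Continuous.intervalIntegrable (by fun_prop) _ _]
  refine Finset.sum_congr rfl fun j _ => ?_
  rw [intervalIntegral.integral_const_mul, mixCoeff]
  ring

section WeightedMoments

variable {μ : Measure S2} [IsProbabilityMeasure μ] {a e : V}

theorem norm_sq_eq_mix {x : V} (hx : ‖x‖ = 1) (he : ‖e‖ = 1) (hxe : ⟪x, e⟫ = 0)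
    (ha : ⟪x ×₃ e, a⟫ = 0) (t : ℝ) :
    ‖⟪x, a⟫ • x + (t * ⟪e, a⟫) • e‖ ^ 2 = (1 - t ^ 2) * ⟪x, a⟫ ^ 2 + t ^ 2 * ‖a‖ ^ 2 := by
  rw [norm_sq_eq_frame hx he hxe a, norm_add_sq_real, real_inner_smul_left, inner_smul_right, hxe,
    norm_smul, norm_smul, hx, he, ha, mul_one, mul_one, Real.norm_eq_abs, Real.norm_eq_abs, sq_abs,
    sq_abs]
  ring

theorem integral_inner_pow_even_mul_weight (hμ : IsRotationInvariant μ) (x : S2) (he : ‖e‖ = 1)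
    (hxe : ⟪(x : V), e⟫ = 0) (ha : ⟪(x : V) ×₃ e, a⟫ = 0) (m : ℕ) :
    ∫ y : S2, ⟪a, y⟫ ^ (2 * m) * (1 / (1 - ⟪(x : V), y⟫ ^ 2) * ⟪(x : V) ×₃ e, y⟫ ^ 2) ∂μ =
      (∑ j ∈ Finset.range (m + 1), mixCoeff m j * ((‖a‖ ^ 2) ^ j * (⟪(x : V), a⟫ ^ 2) ^ (m - j))) /
        (2 * m + 1) := by
  have h := integral_inner_pow_mul_pow_div_one_sub_sq_mul hμ x he hxe ha (2 * m) 0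
  simp only [pow_zero, mul_one, integral_inner_pow_even hμ] at h
  rw [h, ← integral_mul_mix_pow, ← intervalIntegral.integral_div]
  simp only [pow_mul, norm_sq_eq_mix (norm_eq_of_mem_sphere x) he hxe ha, mul_div_assoc]

theorem integral_inner_pow_odd_mul_weight (hμ : IsRotationInvariant μ) (x : S2) (he : ‖e‖ = 1)
    (hxe : ⟪(x : V), e⟫ = 0) (ha : ⟪(x : V) ×₃ e, a⟫ = 0) (m : ℕ) :
    ∫ y : S2, ⟪a, y⟫ ^ (2 * m + 1) *
        (⟪(x : V), y⟫ / (1 - ⟪(x : V), y⟫ ^ 2) * ⟪(x : V) ×₃ e, y⟫ ^ 2) ∂μ =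
      ⟪(x : V), a⟫ * (∑ j ∈ Finset.range (m + 1),
        mixCoeff m j * ((‖a‖ ^ 2) ^ j * (⟪(x : V), a⟫ ^ 2) ^ (m - j))) / (2 * m + 3) := by
  have h := integral_inner_pow_mul_pow_div_one_sub_sq_mul hμ x he hxe ha (2 * m + 1) 1
  have hx (t : ℝ) : ⟪⟪(x : V), a⟫ • (x : V) + (t * ⟪e, a⟫) • e, (x : V)⟫ = ⟪(x : V), a⟫ := by
    rw [inner_add_left, real_inner_smul_left, real_inner_smul_left, real_inner_self_eq_norm_sq,
      norm_eq_of_mem_sphere, real_inner_comm x.1 e, hxe]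
    ring
  simp only [pow_one, integral_inner_pow_odd_mul_inner hμ, hx] at h
  rw [h, ← integral_mul_mix_pow, ← intervalIntegral.integral_const_mul,
    ← intervalIntegral.integral_div]
  simp only [pow_mul, norm_sq_eq_mix (norm_eq_of_mem_sphere x) he hxe ha]
  exact intervalIntegral.integral_congr fun t _ => by ring

end WeightedMoments

/-! ### The kernel applied to vector spherical harmonics -/

section Kernel

theorem commonLineProj_cross_cross_eq {x e a : V} (hx : ‖x‖ = 1) (he : ‖e‖ = 1) (hxe : ⟪x, e⟫ = 0)
    (ha : ⟪x ×₃ e, a⟫ = 0) (y : S2) : commonLineProj x y (y ×₃ (y ×₃ a)) =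
      (1 / (1 - ⟪x, y⟫ ^ 2) * ⟪x ×₃ e, y⟫ ^ 2) • (x ×₃ (x ×₃ a)) +
      (1 / (1 - ⟪x, y⟫ ^ 2) * (⟪e, y⟫ * ⟪x ×₃ e, y⟫)) • (x ×₃ a) := by
  have hxy : ‖x ×₃ (y : V)‖ ^ 2 = 1 - ⟪x, (y : V)⟫ ^ 2 := by
    rw [norm_cross_sq, hx, norm_eq_of_mem_sphere, one_pow, one_mul]
  have hinner : ⟪x ×₃ (y : V), (y : V) ×₃ ((y : V) ×₃ a)⟫ = ⟪e, a⟫ * ⟪x ×₃ e, (y : V)⟫ := by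
    rw [cross_cross_eq, inner_sub_right, inner_smul_right, real_inner_comm (y : V) (x ×₃ y),
      inner_right_cross, real_inner_self_eq_norm_sq, norm_eq_of_mem_sphere, inner_smul_right,
      cross_eq_frame hx he hxe, inner_sub_left, real_inner_smul_left, real_inner_smul_left, ha]
    ring
  rw [commonLineProj_apply, hxy, hinner, cross_eq_frame hx he hxe y, cross_eq_frame hx he hxe a, ha,
    zero_smul, sub_zero, map_smul, cross_cross_of_inner_eq_zero hx hxe]
  module

theorem commonLineProj_cross_eq {x e a : V} (hx : ‖x‖ = 1) (he : ‖e‖ = 1) (hxe : ⟪x, e⟫ = 0)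
    (ha : ⟪x ×₃ e, a⟫ = 0) {y : S2} (hy : ⟪x, (y : V)⟫ ^ 2 ≠ 1) : commonLineProj x y (y ×₃ a) =
      ⟪⟪e, a⟫ • x - ⟪x, a⟫ • e, (y : V)⟫ • (x ×₃ e) -
      (⟪x, y⟫ / (1 - ⟪x, y⟫ ^ 2) * ⟪x ×₃ e, y⟫ ^ 2) • (x ×₃ a) +
      (⟪x, a⟫ * ⟪x ×₃ e, y⟫ -
        ⟪e, a⟫ * (⟪x, y⟫ / (1 - ⟪x, y⟫ ^ 2) * (⟪e, y⟫ * ⟪x ×₃ e, y⟫))) • e := by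
  have hframe := norm_sq_eq_frame hx he hxe y
  rw [norm_eq_of_mem_sphere] at hframe
  have hxy : ‖x ×₃ (y : V)‖ ^ 2 = 1 - ⟪x, (y : V)⟫ ^ 2 := by
    rw [norm_cross_sq, hx, norm_eq_of_mem_sphere, one_pow, one_mul]
  have hya : ⟪(y : V), a⟫ = ⟪x, a⟫ * ⟪x, (y : V)⟫ + ⟪e, a⟫ * ⟪e, (y : V)⟫ := by
    conv_lhs => rw [eq_sum_inner_smul_frame hx he hxe a, ha, zero_smul, add_zero]
    rw [inner_add_right, real_inner_smul_right, real_inner_smul_right, real_inner_comm x,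
      real_inner_comm e]
  have hinner : ⟪x ×₃ (y : V), (y : V) ×₃ a⟫ =
      ⟪x, (y : V)⟫ * (⟪e, a⟫ * ⟪e, (y : V)⟫) - ⟪x, a⟫ * (1 - ⟪x, (y : V)⟫ ^ 2) := by
    rw [inner_cross_cross, real_inner_self_eq_norm_sq, norm_eq_of_mem_sphere, hya]
    ring
  have hy' : 1 - ⟪x, (y : V)⟫ ^ 2 ≠ 0 := sub_ne_zero.2 hy.symm
  rw [commonLineProj_apply, hxy, hinner, cross_eq_frame hx he hxe y, cross_eq_frame hx he hxe a, ha,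
    inner_sub_left, real_inner_smul_left, real_inner_smul_left]
  match_scalars
  · field_simp
    linear_combination -(⟪e, a⟫ * ⟪x, (y : V)⟫) * hframe
  · field_simp
    ring

variable {μ : Measure S2} {x a e : V}

theorem integral_inner_pow_mul_weight_mul_mul_eq_zero (hμ : IsRotationInvariant μ)
    (ha : ⟪x ×₃ e, a⟫ = 0) (l p : ℕ) : ∫ y : S2, ⟪a, y⟫ ^ l *
      (⟪x, y⟫ ^ p / (1 - ⟪x, y⟫ ^ 2) * (⟪e, y⟫ * ⟪x ×₃ e, y⟫)) ∂μ = 0 :=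
  integral_inner_pow_mul_eq_zero_of_odd_reflect hμ ha l fun y => by
    rw [coe_sphereMap, inner_reflect_of_inner_eq_zero (by rw [real_inner_comm, inner_left_cross]),
      inner_reflect_of_inner_eq_zero (by rw [real_inner_comm, inner_right_cross]),
      inner_reflect_self]
    ring

variable [IsProbabilityMeasure μ]

theorem integrable_inner_pow_mul_weight (hx : ‖x‖ = 1) (he : ‖e‖ = 1) (hxe : ⟪x, e⟫ = 0) (a : V)
    (l p : ℕ) {i j : ℕ} (hij : 2 ≤ i + j) : Integrable (fun y : S2 => ⟪a, y⟫ ^ l *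
      (⟪x, y⟫ ^ p / (1 - ⟪x, y⟫ ^ 2) * (⟪e, y⟫ ^ i * ⟪x ×₃ e, y⟫ ^ j))) μ := by
  have hw := integrable_pow_div_one_sub_sq_mul (μ := μ) hx he hxe p hij
  rw [← integrableOn_univ] at hw ⊢
  exact hw.continuousOn_mul (by fun_prop) isCompact_univ

theorem integral_commonLineProj_cross_cross (hμ : IsRotationInvariant μ) (hx : ‖x‖ = 1)
    (he : ‖e‖ = 1) (hxe : ⟪x, e⟫ = 0) (ha : ⟪x ×₃ e, a⟫ = 0) (l : ℕ) :
    ∫ y : S2, commonLineProj x y (⟪a, (y : V)⟫ ^ l • (y ×₃ (y ×₃ a))) ∂μ =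
      (∫ y : S2, ⟪a, y⟫ ^ l * (1 / (1 - ⟪x, y⟫ ^ 2) * ⟪x ×₃ e, y⟫ ^ 2) ∂μ) •
        (x ×₃ (x ×₃ a)) := by
  have hodd := integral_inner_pow_mul_weight_mul_mul_eq_zero hμ ha l 0
  have hint₁ := integrable_inner_pow_mul_weight (μ := μ) hx he hxe a l 0 (show 2 ≤ 0 + 2 by omega)
  have hint₂ := integrable_inner_pow_mul_weight (μ := μ) hx he hxe a l 0 (show 2 ≤ 1 + 1 by omega)
  simp only [pow_zero, one_mul, pow_one] at hint₁ hint₂ hodd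
  simp only [map_smul, commonLineProj_cross_cross_eq hx he hxe ha, smul_add, smul_smul]
  rw [integral_add (hint₁.smul_const _) (hint₂.smul_const _), integral_smul_const,
    integral_smul_const, hodd, zero_smul, add_zero]

theorem integral_commonLineProj_cross (hμ : IsRotationInvariant μ) (x : S2)
    (he : ‖e‖ = 1) (hxe : ⟪(x : V), e⟫ = 0) (ha : ⟪(x : V) ×₃ e, a⟫ = 0) (l : ℕ) :
    ∫ y : S2, commonLineProj x y (⟪a, (y : V)⟫ ^ l • (y ×₃ a)) ∂μ =
      -(∫ y : S2, ⟪a, y⟫ ^ l *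
        (⟪(x : V), y⟫ / (1 - ⟪(x : V), y⟫ ^ 2) * ⟪(x : V) ×₃ e, y⟫ ^ 2) ∂μ) • (x ×₃ a) := by
  have hx := norm_eq_of_mem_sphere x
  set b := ⟪e, a⟫ • (x : V) - ⟪(x : V), a⟫ • e
  have hb : ⟪b, a⟫ = 0 := by
    rw [inner_sub_left, real_inner_smul_left, real_inner_smul_left]
    ring
  have hodd := integral_inner_pow_mul_weight_mul_mul_eq_zero hμ ha l 1
  have hint (c : V) : Integrable (fun y : S2 => ⟪a, (y : V)⟫ ^ l * ⟪c, (y : V)⟫) μ :=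
    integrable_of_continuous (by fun_prop)
  have hint₁ := integrable_inner_pow_mul_weight (μ := μ) hx he hxe a l 1 (show 2 ≤ 0 + 2 by omega)
  have hint₂ := integrable_inner_pow_mul_weight (μ := μ) hx he hxe a l 1 (show 2 ≤ 1 + 1 by omega)
  simp only [pow_zero, one_mul, pow_one] at hint₁ hint₂ hodd
  have hsplit : ∀ᵐ y : S2 ∂μ, commonLineProj x y (⟪a, (y : V)⟫ ^ l • (y ×₃ a)) =
      (⟪a, (y : V)⟫ ^ l * ⟪b, (y : V)⟫) • ((x : V) ×₃ e) +
      (⟪a, y⟫ ^ l * ⟪(x : V) ×₃ e, y⟫) • (⟪(x : V), a⟫ • e) -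
      (⟪a, y⟫ ^ l * (⟪(x : V), y⟫ / (1 - ⟪(x : V), y⟫ ^ 2) * (⟪e, y⟫ * ⟪(x : V) ×₃ e, y⟫))) •
        (⟪e, a⟫ • e) -
      (⟪a, y⟫ ^ l * (⟪(x : V), y⟫ / (1 - ⟪(x : V), y⟫ ^ 2) * ⟪(x : V) ×₃ e, y⟫ ^ 2)) •
        ((x : V) ×₃ a) := by
    filter_upwards [ae_inner_sq_ne_one hμ x] with y hy
    rw [map_smul, commonLineProj_cross_eq hx he hxe ha hy]
    module
  have hab := integral_inner_pow_mul_inner_eq_zero hμ hb l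
  have ham := integral_inner_pow_mul_inner_eq_zero hμ ha l
  rw [integral_congr_ae hsplit, integral_sub ?_ (hint₁.smul_const _),
    integral_sub ?_ (hint₂.smul_const _),
    integral_add ((hint _).smul_const _) ((hint _).smul_const _)]
  · simp only [integral_smul_const, hodd, hab, ham]
    module
  · exact ((hint _).smul_const _).add ((hint _).smul_const _)
  · exact (((hint _).smul_const _).add ((hint _).smul_const _)).sub (hint₂.smul_const _)

end Kernel

/-! ### Vector spherical harmonics -/

section VectorHarmonic

open MvPolynomial

/-- The gradient at `y` of a polynomial in three variables. -/
def polyGrad (y : V) : MvPolynomial (Fin 3) ℝ →ₗ[ℝ] V :=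
  (WithLp.linearEquiv 2 ℝ (Fin 3 → ℝ)).symm.toLinearMap ∘ₗ
    LinearMap.pi fun i => (aeval y.ofLp).toLinearMap ∘ₗ (pderiv i).toLinearMap

/-- The eigensections of the common lines operator: the value at `y` of the section attached to a
polynomial `f` of degree `k`. For even `k` it is `y × ∇f`, and for odd `k` it is `y × (y × ∇f)`,
the negative of the surface gradient of `f`. -/
def vectorHarmonic (k : ℕ) (y : V) : MvPolynomial (Fin 3) ℝ →ₗ[ℝ] V :=
  (cross y ^ (k % 2 + 1)) ∘ₗ polyGrad y

/-- The eigenvalue of the common lines operator on vector harmonics of degree `k ≥ 1`. -/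
def commonLinesEigenvalue (k : ℕ) : ℝ := (-1) ^ (k - 1) / (k * (k + 1))

theorem polyGrad_apply (y : V) (f : MvPolynomial (Fin 3) ℝ) (i : Fin 3) :
    polyGrad y f i = eval y.ofLp (pderiv i f) := rfl

theorem continuous_polyGrad (f : MvPolynomial (Fin 3) ℝ) : Continuous fun y => polyGrad y f :=
  (PiLp.continuous_toLp 2 _).comp <| continuous_pi fun i =>
    (continuous_eval (pderiv i f)).comp (PiLp.continuous_ofLp 2 _)

theorem polyGrad_linearForm_pow (a y : V) (k : ℕ) :
    polyGrad y (linearForm a.ofLp ^ k) = (k * ⟪a, y⟫ ^ (k - 1)) • a := by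
  ext i
  rw [polyGrad_apply, pderiv_linearForm_pow, smul_eval, eval_pow, eval_linearForm,
    ← inner_eq_dotProduct, PiLp.smul_apply, smul_eq_mul]
  ring

theorem inner_polyGrad_of_isHomogeneous {k : ℕ} {f : MvPolynomial (Fin 3) ℝ}
    (hf : f.IsHomogeneous k) (y : V) : ⟪y, polyGrad y f⟫ = k * eval y.ofLp f := by
  have heuler := congrArg (eval y.ofLp) hf.sum_X_mul_pderiv
  simp only [map_sum, map_mul, eval_X, nsmul_eq_mul, map_natCast] at heuler
  rw [inner_eq_dotProduct, ← heuler]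
  rfl

theorem vectorHarmonic_apply (k : ℕ) (y : V) (f : MvPolynomial (Fin 3) ℝ) :
    vectorHarmonic k y f = (cross y ^ (k % 2 + 1)) (polyGrad y f) := rfl

theorem continuous_vectorHarmonic (k : ℕ) (f : MvPolynomial (Fin 3) ℝ) :
    Continuous fun y => vectorHarmonic k y f := by
  have hpow (n : ℕ) : Continuous fun y => (cross y ^ n) (polyGrad y f) := by
    induction n with
    | zero => exact continuous_polyGrad f
    | succ n ih =>
      simp only [pow_succ', Module.End.mul_apply]
      exact continuous_cross.comp₂ continuous_id ih
  exact hpow (k % 2 + 1)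

theorem vectorHarmonic_mem_plane (k : ℕ) (y : S2) (f : MvPolynomial (Fin 3) ℝ) :
    vectorHarmonic k y f ∈ plane y := by
  rw [mem_plane, vectorHarmonic_apply, pow_succ', Module.End.mul_apply, inner_left_cross]

theorem polyGrad_eq_smul_of_vectorHarmonic_eq_zero {k : ℕ} {f : MvPolynomial (Fin 3) ℝ} {y : S2}
    (h : vectorHarmonic k y f = 0) : polyGrad y f = ⟪(y : V), polyGrad y f⟫ • (y : V) := by
  have hyy : (y : V) ×₃ ((y : V) ×₃ polyGrad y f) = 0 := by
    rcases Nat.mod_two_eq_zero_or_one k with hk | hk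
    · rw [vectorHarmonic_apply, hk, zero_add, pow_one] at h
      rw [h, map_zero]
    · rwa [vectorHarmonic_apply, hk, one_add_one_eq_two, sq, Module.End.mul_apply] at h
  rw [cross_cross_eq, real_inner_self_eq_norm_sq, norm_eq_of_mem_sphere, one_pow, one_smul] at hyy
  exact (sub_eq_zero.1 hyy).symm

theorem eq_zero_of_forall_vectorHarmonic_eq_zero {k : ℕ} (hk : k ≠ 0)
    {f : MvPolynomial (Fin 3) ℝ} (hf : f ∈ harmonicSubmodule (Fin 3) ℝ k)
    (h : ∀ y : S2, vectorHarmonic k y f = 0) : f = 0 := by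
  refine eq_zero_of_forall_norm_eq_one_eval_pderiv_eq hf (fun y hy i => ?_) ?_
  · have hgrad := polyGrad_eq_smul_of_vectorHarmonic_eq_zero
      (h ⟨y, mem_sphere_zero_iff_norm.2 hy⟩)
    rw [inner_polyGrad_of_isHomogeneous hf.1] at hgrad
    rw [← polyGrad_apply, hgrad]
    rfl
  · rw [Fintype.card_fin]
    exact mul_ne_zero hk (by omega)

theorem vectorHarmonic_laplacian_pow_linearForm_pow (a x : V) (j k : ℕ) :
    vectorHarmonic k x ((laplacian (Fin 3) ℝ ^ j) (linearForm a.ofLp ^ k)) =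
      (k.descFactorial (2 * j + 1) * ((‖a‖ ^ 2) ^ j * ⟪x, a⟫ ^ (k - 1 - 2 * j))) •
        (cross x ^ (k % 2 + 1)) a := by
  rw [laplacian_pow_linearForm_pow, map_smul, vectorHarmonic_apply, polyGrad_linearForm_pow,
    map_smul, smul_smul, ← inner_eq_dotProduct, real_inner_self_eq_norm_sq, real_inner_comm,
    Nat.descFactorial_succ, Nat.cast_mul, Nat.sub_right_comm]
  congr 1
  ring

theorem vectorHarmonic_linearForm_pow (a x : V) (k : ℕ) :
    vectorHarmonic k x (linearForm a.ofLp ^ k) =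
      (k * ⟪a, x⟫ ^ (k - 1)) • (cross x ^ (k % 2 + 1)) a := by
  rw [vectorHarmonic_apply, polyGrad_linearForm_pow, map_smul]

variable {μ : Measure S2} [IsProbabilityMeasure μ]

theorem integral_commonLineProj_vectorHarmonic_odd (hμ : IsRotationInvariant μ) (x : S2) (a : V)
    (m : ℕ) :
    ∫ y : S2, commonLineProj x y
        (vectorHarmonic (2 * m + 1) y (linearForm a.ofLp ^ (2 * m + 1))) ∂μ =
      ∑ j ∈ Finset.range (m + 1), (mixCoeff m j / (2 * m + 1).descFactorial (2 * j + 1)) •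
        vectorHarmonic (2 * m + 1) x
          ((laplacian (Fin 3) ℝ ^ j) (linearForm a.ofLp ^ (2 * m + 1))) := by
  obtain ⟨e, he, hxe, ha⟩ := exists_frame_adapted (norm_eq_of_mem_sphere x) a
  have hmod : (2 * m + 1) % 2 + 1 = 2 := by omega
  have hsmul (y : S2) :
      commonLineProj x y (vectorHarmonic (2 * m + 1) y (linearForm a.ofLp ^ (2 * m + 1))) =
        (2 * m + 1 : ℝ) • commonLineProj x y (⟪a, (y : V)⟫ ^ (2 * m) • (y ×₃ (y ×₃ a))) := by
    rw [vectorHarmonic_linearForm_pow, hmod, sq, Module.End.mul_apply, mul_smul, map_smul]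
    push_cast
    rfl
  simp only [hsmul, integral_smul]
  rw [integral_commonLineProj_cross_cross hμ (norm_eq_of_mem_sphere x) he hxe ha,
    integral_inner_pow_even_mul_weight hμ x he hxe ha, smul_smul, mul_div_cancel₀ _ (by positivity),
    Finset.sum_smul]
  refine Finset.sum_congr rfl fun j hj => ?_
  have hdesc : ((2 * m + 1).descFactorial (2 * j + 1) : ℝ) ≠ 0 :=
    Nat.cast_ne_zero.2 (Nat.pos_iff_ne_zero.1 (Nat.descFactorial_pos.2 (by grind)))
  rw [vectorHarmonic_laplacian_pow_linearForm_pow, hmod, sq (cross _), Module.End.mul_apply,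
    smul_smul, ← mul_assoc (_ / _), div_mul_cancel₀ _ hdesc, Nat.add_sub_cancel, ← Nat.mul_sub,
    pow_mul ⟪_, _⟫]

theorem integral_commonLineProj_vectorHarmonic_even (hμ : IsRotationInvariant μ) (x : S2) (a : V)
    (m : ℕ) :
    ∫ y : S2, commonLineProj x y
        (vectorHarmonic (2 * m + 2) y (linearForm a.ofLp ^ (2 * m + 2))) ∂μ =
      ∑ j ∈ Finset.range (m + 1), (-((2 * m + 2) / (2 * m + 3)) * mixCoeff m j /
        (2 * m + 2).descFactorial (2 * j + 1)) •
        vectorHarmonic (2 * m + 2) x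
          ((laplacian (Fin 3) ℝ ^ j) (linearForm a.ofLp ^ (2 * m + 2))) := by
  obtain ⟨e, he, hxe, ha⟩ := exists_frame_adapted (norm_eq_of_mem_sphere x) a
  have hmod : (2 * m + 2) % 2 + 1 = 1 := by omega
  have hsmul (y : S2) :
      commonLineProj x y (vectorHarmonic (2 * m + 2) y (linearForm a.ofLp ^ (2 * m + 2))) =
        (2 * m + 2 : ℝ) • commonLineProj x y (⟪a, (y : V)⟫ ^ (2 * m + 1) • (y ×₃ a)) := by
    rw [vectorHarmonic_linearForm_pow, hmod, pow_one, mul_smul, map_smul]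
    push_cast
    rfl
  simp only [hsmul, integral_smul]
  rw [integral_commonLineProj_cross hμ x he hxe ha,
    integral_inner_pow_odd_mul_weight hμ x he hxe ha, smul_smul, Finset.mul_sum,
    Finset.sum_div, ← Finset.sum_neg_distrib, Finset.mul_sum, Finset.sum_smul]
  refine Finset.sum_congr rfl fun j hj => ?_
  have hdesc : ((2 * m + 2).descFactorial (2 * j + 1) : ℝ) ≠ 0 :=
    Nat.cast_ne_zero.2 (Nat.pos_iff_ne_zero.1 (Nat.descFactorial_pos.2 (by grind)))
  rw [vectorHarmonic_laplacian_pow_linearForm_pow, hmod, pow_one, smul_smul,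
    ← mul_assoc (_ / _), div_mul_cancel₀ _ hdesc,
    show 2 * m + 2 - 1 - 2 * j = 2 * (m - j) + 1 by grind, pow_succ ⟪_, _⟫ (2 * _), pow_mul ⟪_, _⟫]
  congr 1
  ring

theorem exists_integral_commonLineProj_vectorHarmonic_linearForm_pow (hμ : IsRotationInvariant μ)
    {k : ℕ} (hk : k ≠ 0) : ∃ c : ℕ → ℝ, c 0 = commonLinesEigenvalue k ∧ ∀ (x : S2) (a : V),
      ∫ y : S2, commonLineProj x y (vectorHarmonic k y (linearForm a.ofLp ^ k)) ∂μ =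
        ∑ j ∈ Finset.range ((k - 1) / 2 + 1), c j •
          vectorHarmonic k x ((laplacian (Fin 3) ℝ ^ j) (linearForm a.ofLp ^ k)) := by
  obtain ⟨m, rfl | rfl⟩ : ∃ m, k = 2 * m + 1 ∨ k = 2 * m + 2 := ⟨(k - 1) / 2, by omega⟩
  · refine ⟨fun j => mixCoeff m j / (2 * m + 1).descFactorial (2 * j + 1), ?_, fun x a => ?_⟩
    · simp only [mixCoeff_zero, commonLinesEigenvalue, Nat.add_sub_cancel, pow_mul, neg_one_sq,
        one_pow]
      push_cast [Nat.descFactorial]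
      field_simp
      ring
    · rw [integral_commonLineProj_vectorHarmonic_odd hμ x a m,
        show (2 * m + 1 - 1) / 2 = m by omega]
  · refine ⟨fun j => -((2 * m + 2) / (2 * m + 3)) * mixCoeff m j /
      (2 * m + 2).descFactorial (2 * j + 1), ?_, fun x a => ?_⟩
    · simp only [mixCoeff_zero, commonLinesEigenvalue, show 2 * m + 2 - 1 = 2 * m + 1 by omega,
        pow_succ (-1 : ℝ) (2 * m), pow_mul, neg_one_sq, one_pow]
      push_cast [Nat.descFactorial]
      field_simp
      ring
    · rw [integral_commonLineProj_vectorHarmonic_even hμ x a m,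
        show (2 * m + 2 - 1) / 2 = m by omega]

end VectorHarmonic

/-! ### Operators of bounded Hilbert–Schmidt norm -/

section HilbertSchmidt

variable {E F : Type*} [NormedAddCommGroup E] [InnerProductSpace ℝ E] [NormedAddCommGroup F]
  [NormedSpace ℝ F]

/-- The squared Hilbert–Schmidt norm of `C` is at most `S`, tested on finite orthonormal families so
that neither a Hilbert basis nor summability enters. -/
def HilbertSchmidtNormSqLE (C : E →L[ℝ] F) (S : ℝ) : Prop :=
  ∀ (n : ℕ) (e : Fin n → E), Orthonormal ℝ e → ∑ i, ‖C (e i)‖ ^ 2 ≤ S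

variable {C : E →L[ℝ] F} {S : ℝ} {ι : Type*} {v : ι → E}

theorem HilbertSchmidtNormSqLE.sum_norm_sq_le [Fintype ι] (hC : HilbertSchmidtNormSqLE C S)
    (hv : Orthonormal ℝ v) : ∑ i, ‖C (v i)‖ ^ 2 ≤ S := by
  let φ := Fintype.equivFin ι
  have hle := hC _ (v ∘ φ.symm) (hv.comp _ φ.symm.injective)
  exact (φ.symm.sum_comp fun i => ‖C (v i)‖ ^ 2).symm.trans_le hle

theorem orthonormal_option_elim {w : E} (hw : ‖w‖ = 1) (hv : Orthonormal ℝ v)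
    (hvw : ∀ i, ⟪v i, w⟫ = 0) : Orthonormal ℝ fun o : Option ι => o.elim w v := by
  refine ⟨Option.rec hw hv.1, ?_⟩
  rintro (_ | i) (_ | j) hij
  · exact absurd rfl hij
  · exact (real_inner_comm _ _).trans (hvw j)
  · exact hvw i
  · exact hv.2 fun h => hij (congrArg some h)

theorem HilbertSchmidtNormSqLE.norm_apply_sq_le (hC : HilbertSchmidtNormSqLE C S)
    (hv : Orthonormal ℝ v) (s : Finset ι) {u : E} (hu : ∀ i ∈ s, ⟪v i, u⟫ = 0) :
    ‖C u‖ ^ 2 ≤ (S - ∑ i ∈ s, ‖C (v i)‖ ^ 2) * ‖u‖ ^ 2 := by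
  rcases eq_or_ne u 0 with rfl | hu₀
  · simp
  have hnorm : ‖‖u‖⁻¹ • u‖ = 1 := norm_smul_inv_norm hu₀
  have hle := hC.sum_norm_sq_le (orthonormal_option_elim hnorm
    (hv.comp (Subtype.val : s → ι) Subtype.val_injective) fun i => by
      rw [Function.comp_apply, real_inner_smul_right, hu i i.2, mul_zero])
  rw [Fintype.sum_option] at hle
  simp only [Option.elim_none, Option.elim_some, Function.comp_apply, map_smul, norm_smul,
    norm_inv, norm_norm, mul_pow, inv_pow] at hle
  rw [Finset.sum_coe_sort s fun i => ‖C (v i)‖ ^ 2, ← le_sub_iff_add_le, ← div_eq_inv_mul] at hle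
  exact (div_le_iff₀ (by positivity)).1 hle

theorem tendsto_sub_sum_norm_apply_sq (hsum : HasSum (fun i => ‖C (v i)‖ ^ 2) S) :
    Filter.Tendsto (fun s : Finset ι => S - ∑ i ∈ s, ‖C (v i)‖ ^ 2) Filter.atTop (nhds 0) :=
  sub_self S ▸ Filter.Tendsto.const_sub S hsum

theorem HilbertSchmidtNormSqLE.apply_eq_zero (hC : HilbertSchmidtNormSqLE C S)
    (hv : Orthonormal ℝ v) (hsum : HasSum (fun i => ‖C (v i)‖ ^ 2) S) {u : E}
    (hu : ∀ i, ⟪v i, u⟫ = 0) : C u = 0 := by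
  have hle : ‖C u‖ ^ 2 ≤ 0 * ‖u‖ ^ 2 :=
    ge_of_tendsto' ((tendsto_sub_sum_norm_apply_sq hsum).mul_const _)
      fun s => hC.norm_apply_sq_le hv s fun i _ => hu i
  rw [zero_mul] at hle
  exact norm_eq_zero.1 (pow_eq_zero_iff two_ne_zero |>.1 (hle.antisymm (sq_nonneg _)))

theorem HilbertSchmidtNormSqLE.norm_comp_starProjection_sub_le
    (hC : HilbertSchmidtNormSqLE C S) (hv : Orthonormal ℝ v) (s : Finset ι)
    [(span ℝ (v '' s)).HasOrthogonalProjection] :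
    ‖C ∘L (span ℝ (v '' s)).starProjection - C‖ ≤ √(S - ∑ i ∈ s, ‖C (v i)‖ ^ 2) := by
  have hnonneg : 0 ≤ S - ∑ i ∈ s, ‖C (v i)‖ ^ 2 := by
    have := hC.sum_norm_sq_le (hv.comp (Subtype.val : s → ι) Subtype.val_injective)
    rw [sub_nonneg, ← Finset.sum_coe_sort]
    exact this
  refine ContinuousLinearMap.opNorm_le_bound _ (Real.sqrt_nonneg _) fun u => ?_
  set W := span ℝ (v '' s)
  have horth (i) (hi : i ∈ s) : ⟪v i, u - W.starProjection u⟫ = 0 :=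
    W.sub_starProjection_mem_orthogonal u _ (subset_span ⟨i, hi, rfl⟩)
  have hnorm : ‖u - W.starProjection u‖ ≤ ‖u‖ := by
    rw [← starProjection_orthogonal_val]
    exact norm_starProjection_apply_le _ _
  rw [sub_apply, ContinuousLinearMap.comp_apply, ← map_sub, ← neg_sub, map_neg,
    norm_neg, ← sq_le_sq₀ (norm_nonneg _) (by positivity), mul_pow, Real.sq_sqrt hnonneg]
  exact (hC.norm_apply_sq_le hv s horth).trans (by gcongr)

theorem HilbertSchmidtNormSqLE.isCompactOperator [CompleteSpace F]
    (hC : HilbertSchmidtNormSqLE C S) (hv : Orthonormal ℝ v)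
    (hsum : HasSum (fun i => ‖C (v i)‖ ^ 2) S) : IsCompactOperator C := by
  have hfin (s : Finset ι) : FiniteDimensional ℝ (span ℝ (v '' s)) :=
    FiniteDimensional.span_of_finite ℝ (s.finite_toSet.image v)
  have hlim : Filter.Tendsto (fun s : Finset ι => C ∘L (span ℝ (v '' s)).starProjection)
      Filter.atTop (nhds C) := by
    have hsqrt := (tendsto_sub_sum_norm_apply_sq hsum).sqrt
    rw [Real.sqrt_zero] at hsqrt
    exact tendsto_iff_norm_sub_tendsto_zero.2 (squeeze_zero (fun _ => norm_nonneg _)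
      (fun s => hC.norm_comp_starProjection_sub_le hv s) hsqrt)
  refine isCompactOperator_of_tendsto hlim (.of_forall fun s => ?_)
  have : ProperSpace (span ℝ (v '' s)) := FiniteDimensional.proper ℝ _
  exact (isCompactOperator_of_locallyCompactSpace_dom
    (span ℝ (v '' s)).orthogonalProjectionOnto).clm_comp (C ∘L (span ℝ (v '' s)).subtypeL)

end HilbertSchmidt

/-! ### Symmetric operators diagonal on an orthonormal family -/

section Eigenspaces

variable {E : Type*} [NormedAddCommGroup E] [InnerProductSpace ℝ E] {T : E →ₗ[ℝ] E}
  {ι : Type*} {v : ι → E} {c : ι → ℝ} {a b : ℝ}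

theorem inner_eq_zero_of_map_eq_smul (hT : T.IsSymmetric) (hab : a ≠ b) {x y : E}
    (hx : T x = a • x) (hy : T y = b • y) : ⟪x, y⟫ = 0 :=
  hT.orthogonalFamily_eigenspaces hab (⟨x, Module.End.mem_eigenspace_iff.2 hx⟩)
    (⟨y, Module.End.mem_eigenspace_iff.2 hy⟩)

theorem eigenspace_eq_span_range (hT : T.IsSymmetric) (hTv : ∀ i, T (v i) = c i • v i)
    (hker : ∀ u, (∀ i, ⟪v i, u⟫ = 0) → T u = 0) (ha : a ≠ 0) [Finite {i // c i = a}] :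
    Module.End.eigenspace T a = span ℝ (Set.range fun i : {i // c i = a} => v i) := by
  set W := span ℝ (Set.range fun i : {i // c i = a} => v i)
  have : FiniteDimensional ℝ W := FiniteDimensional.span_of_finite ℝ (Set.finite_range _)
  have hle : W ≤ Module.End.eigenspace T a := by
    rw [span_le]
    rintro _ ⟨⟨i, rfl⟩, rfl⟩
    exact Module.End.mem_eigenspace_iff.2 (hTv i)
  have hinf : Wᗮ ⊓ Module.End.eigenspace T a = ⊥ := by
    refine (Submodule.eq_bot_iff _).2 fun u ⟨huW, hu⟩ => ?_
    have hTu : T u = a • u := Module.End.mem_eigenspace_iff.1 hu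
    have hzero : T u = 0 := hker u fun i => by
      by_cases hi : c i = a
      · exact huW (v i) (subset_span ⟨⟨i, hi⟩, rfl⟩)
      · exact inner_eq_zero_of_map_eq_smul hT hi (hTv i) hTu
    exact (smul_eq_zero.1 (hTu.symm.trans hzero)).resolve_left ha
  rw [← sup_orthogonal_inf_of_hasOrthogonalProjection hle, hinf, sup_bot_eq]

theorem finrank_eigenspace_eq_card (hT : T.IsSymmetric) (hv : Orthonormal ℝ v)
    (hTv : ∀ i, T (v i) = c i • v i) (hker : ∀ u, (∀ i, ⟪v i, u⟫ = 0) → T u = 0) (ha : a ≠ 0)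
    [Finite {i // c i = a}] :
    Module.finrank ℝ (Module.End.eigenspace T a) = Nat.card {i // c i = a} := by
  have := Fintype.ofFinite {i // c i = a}
  rw [eigenspace_eq_span_range hT hTv hker ha, Nat.card_eq_fintype_card]
  exact finrank_span_eq_card (hv.comp _ Subtype.val_injective).linearIndependent

theorem hasEigenvalue_iff_exists_eq (hT : T.IsSymmetric) (hv : Orthonormal ℝ v)
    (hTv : ∀ i, T (v i) = c i • v i) (hker : ∀ u, (∀ i, ⟪v i, u⟫ = 0) → T u = 0) (ha : a ≠ 0) :
    Module.End.HasEigenvalue T a ↔ ∃ i, c i = a := by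
  refine ⟨fun h => ?_, ?_⟩
  · by_contra! hne
    have : IsEmpty {i // c i = a} := ⟨fun i => hne i i.2⟩
    refine Module.End.hasEigenvalue_iff.1 h ?_
    rw [eigenspace_eq_span_range hT hTv hker ha, Set.range_eq_empty, span_empty]
  · rintro ⟨i, rfl⟩
    exact Module.End.hasEigenvalue_of_hasEigenvector
      ⟨Module.End.mem_eigenspace_iff.2 (hTv i), hv.ne_zero i⟩

end Eigenspaces

theorem exists_orthonormal_of_le_finrank {E F : Type*} [NormedAddCommGroup E]
    [InnerProductSpace ℝ E] [AddCommGroup F] [Module ℝ F] [Module.Finite ℝ F] {T : F →ₗ[ℝ] E}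
    (hT : Function.Injective T) {n : ℕ} (hn : n ≤ Module.finrank ℝ F) :
    ∃ v : Fin n → E, Orthonormal ℝ v ∧ ∀ i, v i ∈ LinearMap.range T := by
  have hle : n ≤ Module.finrank ℝ (LinearMap.range T) :=
    hn.trans_eq (LinearMap.finrank_range_of_inj hT).symm
  let b := stdOrthonormalBasis ℝ (LinearMap.range T)
  have hb := b.orthonormal.comp_linearIsometry (LinearMap.range T).subtypeₗᵢ
  exact ⟨_, hb.comp _ (Fin.castLE_injective hle), fun i => (b (Fin.castLE hle i)).2⟩

/-! ### The common lines operator -/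

section Operator

variable {μ : Measure S2}

/-- The condition that `C` is the common lines operator on square integrable sections. -/
def IsCommonLinesOperator (μ : Measure S2) (C : Hsub μ →L[ℝ] Hsub μ) : Prop :=
  ∀ s : Hsub μ, ∀ᵐ x ∂μ, (C s : Lp V 2 μ) x = ∫ y, Cker x y ((s : Lp V 2 μ) y) ∂μ

theorem measurable_commonLineProj_apply {f : S2 → V} (hf : Measurable f) :
    Measurable fun p : S2 × S2 => commonLineProj p.1 p.2 (f p.2) := by
  have hfst : Measurable fun p : S2 × S2 => (p.1 : V) :=
    measurable_subtype_coe.comp measurable_fst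
  have hsnd : Measurable fun p : S2 × S2 => (p.2 : V) :=
    measurable_subtype_coe.comp measurable_snd
  have happly := measurable_commonLineProj.comp
    ((hfst.prodMk hsnd).prodMk (hf.comp measurable_snd))
  exact happly

theorem integrable_commonLineProj_apply (x : S2) {f : S2 → V} (hf : Measurable f)
    (hfi : Integrable f μ) : Integrable (fun y : S2 => commonLineProj x y (f y)) μ :=
  hfi.mono ((measurable_commonLineProj_apply hf).comp measurable_prodMk_left).aestronglyMeasurable
    (.of_forall fun _ => norm_commonLineProj_apply_le _ _ _)

theorem isClosed_Hsub : IsClosed (Hsub μ : Set (Lp V 2 μ)) := by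
  rw [← isSeqClosed_iff_isClosed]
  intro u f hu hf
  obtain ⟨ns, -, hns⟩ := (tendstoInMeasure_of_tendsto_Lp hf).exists_seq_tendsto_ae
  have hplane : ∀ᵐ x ∂μ, ∀ n, (u n : S2 → V) x ∈ plane x := ae_all_iff.2 hu
  change ∀ᵐ x ∂μ, f x ∈ plane x
  filter_upwards [hns, hplane] with x hx hx'
  exact (Submodule.isClosed_orthogonal (ℝ ∙ (x : V))).mem_of_tendsto hx (.of_forall fun n => hx' _)

instance completeSpace_Hsub : CompleteSpace (Hsub μ) := isClosed_Hsub.completeSpace_coe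

variable [IsProbabilityMeasure μ]

theorem IsCommonLinesOperator.ae_eq_integral_commonLineProj {C : Hsub μ →L[ℝ] Hsub μ}
    (hC : IsCommonLinesOperator μ C) (hμ : IsRotationInvariant μ) (s : Hsub μ) :
    ∀ᵐ x ∂μ, (C s : Lp V 2 μ) x = ∫ y : S2, commonLineProj x y ((s : Lp V 2 μ) y) ∂μ := by
  filter_upwards [hC s] with x hx
  rw [hx]
  refine integral_congr_ae ?_
  filter_upwards [ae_cross_ne_zero hμ x] with y hy
  exact Cker_eq_commonLineProj x y hy _

theorem IsCommonLinesOperator.inner_eq_integral_integral {C : Hsub μ →L[ℝ] Hsub μ}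
    (hC : IsCommonLinesOperator μ C) (hμ : IsRotationInvariant μ) (f g : Hsub μ) :
    ⟪C f, g⟫ = ∫ x : S2, ∫ y : S2,
      ⟪commonLineProj x y ((f : Lp V 2 μ) y), (g : Lp V 2 μ) x⟫ ∂μ ∂μ := by
  rw [Submodule.coe_inner, L2.inner_def]
  refine integral_congr_ae ?_
  filter_upwards [hC.ae_eq_integral_commonLineProj hμ f] with x hx
  have hint := integrable_commonLineProj_apply x (Lp.stronglyMeasurable (f : Lp V 2 μ)).measurable
    ((Lp.memLp (f : Lp V 2 μ)).integrable one_le_two)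
  rw [hx, real_inner_comm, ← integral_inner hint]
  simp only [real_inner_comm]

theorem IsCommonLinesOperator.inner_left_eq_inner_right {C : Hsub μ →L[ℝ] Hsub μ}
    (hC : IsCommonLinesOperator μ C) (hμ : IsRotationInvariant μ) (f g : Hsub μ) :
    ⟪C f, g⟫ = ⟪f, C g⟫ := by
  have hmeas (h : Hsub μ) : Measurable ((h : Lp V 2 μ) : S2 → V) :=
    (Lp.stronglyMeasurable _).measurable
  have hint (h : Hsub μ) : Integrable ((h : Lp V 2 μ) : S2 → V) μ :=
    (Lp.memLp _).integrable one_le_two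
  rw [real_inner_comm (C g) f, hC.inner_eq_integral_integral hμ f g,
    hC.inner_eq_integral_integral hμ g f, integral_integral_swap]
  · refine integral_congr_ae (.of_forall fun y => integral_congr_ae (.of_forall fun x => ?_))
    exact (inner_commonLineProj_comm _ _ _ _).trans (real_inner_comm _ _)
  · refine ((hint g).norm.mul_prod (hint f).norm).mono
      ((measurable_commonLineProj_apply (hmeas f)).inner
        ((hmeas g).comp measurable_fst)).aestronglyMeasurable (.of_forall fun p => ?_)
    rw [norm_mul, norm_norm, norm_norm, mul_comm]
    exact (norm_inner_le_norm _ _).trans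
      (mul_le_mul_of_nonneg_right (norm_commonLineProj_apply_le _ _ _) (norm_nonneg _))

/-! ### Eigensections -/

/-- The vector harmonic of degree `k` attached to a polynomial, as a continuous vector field. -/
def vectorHarmonicMap (k : ℕ) : MvPolynomial (Fin 3) ℝ →ₗ[ℝ] C(S2, V) where
  toFun f := ⟨fun y => vectorHarmonic k y f,
    (continuous_vectorHarmonic k f).comp continuous_subtype_val⟩
  map_add' f g := ContinuousMap.ext fun y => map_add (vectorHarmonic k y) f g
  map_smul' c f := ContinuousMap.ext fun y => map_smul (vectorHarmonic k y) c f

theorem coeFn_toLp_vectorHarmonicMap (k : ℕ) (f : MvPolynomial (Fin 3) ℝ) :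
    ∀ᵐ y ∂μ, ContinuousMap.toLp (E := V) 2 μ ℝ (vectorHarmonicMap k f) y = vectorHarmonic k y f :=
  ContinuousMap.coeFn_toLp μ _

/-- The vector harmonic of degree `k` attached to a polynomial, as a square integrable section. -/
def vectorHarmonicSection (μ : Measure S2) [IsProbabilityMeasure μ] (k : ℕ) :
    MvPolynomial (Fin 3) ℝ →ₗ[ℝ] Hsub μ :=
  ((ContinuousMap.toLp (E := V) 2 μ ℝ).toLinearMap ∘ₗ vectorHarmonicMap k).codRestrict (Hsub μ)
    fun f => by
      change ∀ᵐ y ∂μ, ContinuousMap.toLp (E := V) 2 μ ℝ (vectorHarmonicMap k f) y ∈ plane y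
      filter_upwards [coeFn_toLp_vectorHarmonicMap k f] with y hy
      exact hy ▸ vectorHarmonic_mem_plane k y f

theorem coeFn_vectorHarmonicSection (k : ℕ) (f : MvPolynomial (Fin 3) ℝ) :
    ∀ᵐ y ∂μ, (vectorHarmonicSection μ k f : Lp V 2 μ) y = vectorHarmonic k y f :=
  coeFn_toLp_vectorHarmonicMap k f

theorem eq_zero_of_vectorHarmonicSection_eq_zero (hμ : IsRotationInvariant μ) {k : ℕ} (hk : k ≠ 0)
    {f : MvPolynomial (Fin 3) ℝ} (hf : f ∈ harmonicSubmodule (Fin 3) ℝ k)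
    (h : vectorHarmonicSection μ k f = 0) : f = 0 := by
  have := isOpenPosMeasure_of_isRotationInvariant hμ
  have hmap : vectorHarmonicMap k f = 0 :=
    ContinuousMap.toLp_injective (𝕜 := ℝ) (p := 2) μ
      ((congrArg Subtype.val h).trans (map_zero (ContinuousMap.toLp 2 μ ℝ)).symm)
  exact eq_zero_of_forall_vectorHarmonic_eq_zero hk hf fun y => DFunLike.congr_fun hmap y

theorem exists_integral_commonLineProj_vectorHarmonic (hμ : IsRotationInvariant μ)
    {k : ℕ} (hk : k ≠ 0) : ∃ c : ℕ → ℝ, c 0 = commonLinesEigenvalue k ∧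
      ∀ (x : S2) {f : MvPolynomial (Fin 3) ℝ}, f.IsHomogeneous k →
        ∫ y : S2, commonLineProj x y (vectorHarmonic k y f) ∂μ =
          ∑ j ∈ Finset.range ((k - 1) / 2 + 1), c j •
            vectorHarmonic k x ((laplacian (Fin 3) ℝ ^ j) f) := by
  obtain ⟨c, hc₀, hc⟩ := exists_integral_commonLineProj_vectorHarmonic_linearForm_pow hμ hk
  have hint (x : S2) (f : MvPolynomial (Fin 3) ℝ) :
      Integrable (fun y : S2 => commonLineProj x y (vectorHarmonic k y f)) μ :=
    integrable_commonLineProj_apply x (vectorHarmonicMap k f).continuous.measurable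
      (integrable_of_continuous (vectorHarmonicMap k f).continuous)
  refine ⟨c, hc₀, fun x f hf => ?_⟩
  have hspan := mem_span_range_linearForm_pow hf
  clear hf
  induction hspan using span_induction with
  | mem f hf =>
    obtain ⟨a, rfl⟩ := hf
    exact hc x (WithLp.toLp 2 a)
  | zero => simp only [map_zero, integral_zero, smul_zero, Finset.sum_const_zero]
  | add f g _ _ hf hg =>
    simp only [map_add, smul_add, Finset.sum_add_distrib]
    rw [integral_add (hint x f) (hint x g), hf, hg]
  | smul r f _ hf =>
    simp only [map_smul, integral_smul, smul_comm _ r, ← Finset.smul_sum]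
    rw [hf]

theorem integral_commonLineProj_vectorHarmonic (hμ : IsRotationInvariant μ) {k : ℕ} (hk : k ≠ 0)
    {f : MvPolynomial (Fin 3) ℝ} (hf : f ∈ harmonicSubmodule (Fin 3) ℝ k) (x : S2) :
    ∫ y : S2, commonLineProj x y (vectorHarmonic k y f) ∂μ =
      commonLinesEigenvalue k • vectorHarmonic k x f := by
  obtain ⟨c, hc₀, hc⟩ := exists_integral_commonLineProj_vectorHarmonic hμ hk
  have hharm (j : ℕ) : (laplacian (Fin 3) ℝ ^ (j + 1)) f = 0 := by
    rw [pow_succ, Module.End.mul_apply, LinearMap.mem_ker.1 hf.2, map_zero]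
  simp only [hc x hf.1, Finset.sum_range_succ', hharm, map_zero, smul_zero, Finset.sum_const_zero,
    zero_add, hc₀, pow_zero, Module.End.one_apply]

theorem IsCommonLinesOperator.map_vectorHarmonicSection {C : Hsub μ →L[ℝ] Hsub μ}
    (hC : IsCommonLinesOperator μ C) (hμ : IsRotationInvariant μ) {k : ℕ} (hk : k ≠ 0)
    {f : MvPolynomial (Fin 3) ℝ} (hf : f ∈ harmonicSubmodule (Fin 3) ℝ k) :
    C (vectorHarmonicSection μ k f) = commonLinesEigenvalue k • vectorHarmonicSection μ k f := by
  refine Subtype.ext (Lp.ext ?_)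
  filter_upwards [hC.ae_eq_integral_commonLineProj hμ (vectorHarmonicSection μ k f),
    coeFn_vectorHarmonicSection k f,
    Lp.coeFn_smul (commonLinesEigenvalue k) (vectorHarmonicSection μ k f : Lp V 2 μ)]
    with x hCx hx hsmul
  rw [hCx, Submodule.coe_smul, hsmul, Pi.smul_apply, hx,
    ← integral_commonLineProj_vectorHarmonic hμ hk hf]
  refine integral_congr_ae ?_
  filter_upwards [coeFn_vectorHarmonicSection k f] with y hy
  rw [hy]

theorem IsCommonLinesOperator.exists_orthonormal_eigenvectors {C : Hsub μ →L[ℝ] Hsub μ}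
    (hC : IsCommonLinesOperator μ C) (hμ : IsRotationInvariant μ) {k : ℕ} (hk : k ≠ 0) :
    ∃ v : Fin (2 * k + 1) → Hsub μ, Orthonormal ℝ v ∧
      ∀ i, C (v i) = commonLinesEigenvalue k • v i := by
  have hT : Function.Injective
      ((vectorHarmonicSection μ k).domRestrict (harmonicSubmodule (Fin 3) ℝ k)) :=
    (injective_iff_map_eq_zero _).2 fun f hf =>
      Subtype.ext (eq_zero_of_vectorHarmonicSection_eq_zero hμ hk f.2 hf)
  obtain ⟨v, hv, hvT⟩ := exists_orthonormal_of_le_finrank hT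
    (two_mul_add_one_le_finrank_harmonicSubmodule hk)
  refine ⟨v, hv, fun i => ?_⟩
  obtain ⟨f, hf⟩ := hvT i
  rw [← hf]
  exact hC.map_vectorHarmonicSection hμ hk f.2

end Operator

/-! ### The spectrum -/

section Spectrum

variable {μ : Measure S2}

theorem L2_norm_sq_eq_integral (f : Lp V 2 μ) : ‖f‖ ^ 2 = ∫ x, ‖f x‖ ^ 2 ∂μ := by
  simp only [← real_inner_self_eq_norm_sq, L2.inner_def]

variable [IsProbabilityMeasure μ]

theorem memLp_commonLineProj_apply (x : S2) (w : V) :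
    MemLp (fun y : S2 => commonLineProj x y w) 2 μ :=
  .of_bound ((measurable_commonLineProj_apply measurable_const).comp
    measurable_prodMk_left).aestronglyMeasurable ‖w‖
    (.of_forall fun _ => norm_commonLineProj_apply_le _ _ _)

theorem inner_integral_commonLineProj (x : S2) (f : Lp V 2 μ) (w : V) :
    ⟪w, ∫ y : S2, commonLineProj x y (f y) ∂μ⟫ =
      ⟪f, (memLp_commonLineProj_apply x w).toLp _⟫ := by
  rw [← integral_inner (integrable_commonLineProj_apply x (Lp.stronglyMeasurable f).measurable
    ((Lp.memLp f).integrable one_le_two)), L2.inner_def]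
  refine integral_congr_ae ?_
  filter_upwards [(memLp_commonLineProj_apply (μ := μ) x w).coeFn_toLp] with y hy
  rw [hy, real_inner_comm, inner_commonLineProj_comm, commonLineProj_comm]

theorem sum_norm_toLp_commonLineProj_sq_le_one {κ : Type*} [Fintype κ]
    (b : OrthonormalBasis κ ℝ V) (x : S2) :
    ∑ i, ‖(memLp_commonLineProj_apply (μ := μ) x (b i)).toLp‖ ^ 2 ≤ 1 := by
  have hint (i : κ) : Integrable (fun y : S2 => ‖commonLineProj x y (b i)‖ ^ 2) μ :=
    (memLp_commonLineProj_apply x (b i)).integrable_norm_pow two_ne_zero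
  have hnorm (i : κ) : ‖(memLp_commonLineProj_apply (μ := μ) x (b i)).toLp‖ ^ 2 =
      ∫ y : S2, ‖commonLineProj x y (b i)‖ ^ 2 ∂μ := by
    rw [L2_norm_sq_eq_integral]
    refine integral_congr_ae ?_
    filter_upwards [(memLp_commonLineProj_apply (μ := μ) x (b i)).coeFn_toLp] with y hy
    rw [hy]
  calc ∑ i, ‖(memLp_commonLineProj_apply (μ := μ) x (b i)).toLp‖ ^ 2
      = ∫ y : S2, ∑ i, ‖commonLineProj x y (b i)‖ ^ 2 ∂μ := by
        rw [integral_finsetSum _ fun i _ => hint i]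
        exact Finset.sum_congr rfl fun i _ => hnorm i
    _ ≤ ∫ _ : S2, (1 : ℝ) ∂μ :=
        integral_mono (integrable_finsetSum _ fun i _ => hint i) (integrable_const _)
          fun y => sum_norm_commonLineProj_sq_le_one b x y
    _ = 1 := by rw [integral_const, probReal_univ, one_smul]

theorem sum_norm_integral_commonLineProj_sq_le_one {ι : Type*} [Fintype ι] (x : S2)
    {e : ι → Lp V 2 μ} (he : Orthonormal ℝ e) :
    ∑ i, ‖∫ y : S2, commonLineProj x y (e i y) ∂μ‖ ^ 2 ≤ 1 := by
  let b := EuclideanSpace.basisFun (Fin 3) ℝ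
  let K (w : Fin 3) : Lp V 2 μ := (memLp_commonLineProj_apply x (b w)).toLp
  calc ∑ i, ‖∫ y : S2, commonLineProj x y (e i y) ∂μ‖ ^ 2
      = ∑ i, ∑ w, ‖⟪e i, K w⟫‖ ^ 2 := by
        simp only [← b.sum_sq_norm_inner_right, inner_integral_commonLineProj, K]
    _ = ∑ w, ∑ i, ‖⟪e i, K w⟫‖ ^ 2 := Finset.sum_comm
    _ ≤ ∑ w, ‖K w‖ ^ 2 := Finset.sum_le_sum fun w _ => he.sum_inner_products_le _
    _ ≤ 1 := sum_norm_toLp_commonLineProj_sq_le_one b x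

theorem IsCommonLinesOperator.hilbertSchmidtNormSqLE {C : Hsub μ →L[ℝ] Hsub μ}
    (hC : IsCommonLinesOperator μ C) (hμ : IsRotationInvariant μ) :
    HilbertSchmidtNormSqLE C 1 := by
  intro n e he
  have hint (i : Fin n) : Integrable (fun x => ‖(C (e i) : Lp V 2 μ) x‖ ^ 2) μ :=
    (Lp.memLp (C (e i) : Lp V 2 μ)).integrable_norm_pow two_ne_zero
  have hCe : ∀ᵐ x ∂μ, ∀ i, (C (e i) : Lp V 2 μ) x =
      ∫ y : S2, commonLineProj x y ((e i : Lp V 2 μ) y) ∂μ :=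
    ae_all_iff.2 fun i => hC.ae_eq_integral_commonLineProj hμ (e i)
  calc ∑ i, ‖C (e i)‖ ^ 2
      = ∫ x, ∑ i, ‖(C (e i) : Lp V 2 μ) x‖ ^ 2 ∂μ := by
        rw [integral_finsetSum _ fun i _ => hint i]
        exact Finset.sum_congr rfl fun i _ => L2_norm_sq_eq_integral (C (e i) : Lp V 2 μ)
    _ ≤ ∫ _ : S2, (1 : ℝ) ∂μ := by
        refine integral_mono_ae (integrable_finsetSum _ fun i _ => hint i) (integrable_const _) ?_
        filter_upwards [hCe] with x hx
        simp only [hx]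
        exact sum_norm_integral_commonLineProj_sq_le_one x
          (he.comp_linearIsometry (Hsub μ).subtypeₗᵢ)
    _ = 1 := by rw [integral_const, probReal_univ, one_smul]

theorem abs_commonLinesEigenvalue_succ (n : ℕ) :
    |commonLinesEigenvalue (n + 1)| = 1 / ((n + 1) * (n + 2)) := by
  rw [commonLinesEigenvalue, abs_div, abs_pow, abs_neg, abs_one, one_pow,
    abs_of_nonneg (by positivity)]
  push_cast
  ring

theorem commonLinesEigenvalue_succ_ne_zero (n : ℕ) : commonLinesEigenvalue (n + 1) ≠ 0 := by
  rw [← abs_pos, abs_commonLinesEigenvalue_succ]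
  positivity

theorem commonLinesEigenvalue_succ_injective :
    Function.Injective fun n => commonLinesEigenvalue (n + 1) := by
  have hanti : StrictAnti fun n => |commonLinesEigenvalue (n + 1)| := by
    refine strictAnti_nat_of_succ_lt fun n => ?_
    simp only [abs_commonLinesEigenvalue_succ]
    push_cast
    exact one_div_lt_one_div_of_lt (by positivity) (by nlinarith)
  exact fun m n hmn => hanti.injective (congrArg abs hmn)

/-- Indices `(n, i)` of the eigensections: `i` enumerates the `2 (n + 1) + 1` eigensections of
degree `n + 1`. -/
abbrev EigensectionIndex : Type := Σ n : ℕ, Fin (2 * (n + 1) + 1)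

theorem sum_range_mul_commonLinesEigenvalue_sq (N : ℕ) : ∑ n ∈ Finset.range N,
    (2 * (n + 1) + 1 : ℝ) * commonLinesEigenvalue (n + 1) ^ 2 = 1 - (1 / (N + 1)) ^ 2 := by
  induction N with
  | zero => norm_num
  | succ N ih =>
    rw [Finset.sum_range_succ, ih, ← sq_abs (commonLinesEigenvalue _),
      abs_commonLinesEigenvalue_succ]
    push_cast
    field_simp
    ring

theorem hasSum_commonLinesEigenvalue_sq :
    HasSum (fun p : EigensectionIndex => commonLinesEigenvalue (p.1 + 1) ^ 2) 1 := by
  have hdegree : HasSum (fun n : ℕ => (2 * (n + 1) + 1 : ℝ) * commonLinesEigenvalue (n + 1) ^ 2)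
      1 := by
    rw [hasSum_iff_tendsto_nat_of_nonneg (fun n => by positivity)]
    simp only [sum_range_mul_commonLinesEigenvalue_sq]
    simpa using (tendsto_one_div_add_atTop_nhds_zero_nat (𝕜 := ℝ)).pow 2 |>.const_sub 1
  have hfiber (n : ℕ) : HasSum (fun _ : Fin (2 * (n + 1) + 1) => commonLinesEigenvalue (n + 1) ^ 2)
      ((2 * (n + 1) + 1 : ℝ) * commonLinesEigenvalue (n + 1) ^ 2) := by
    convert hasSum_fintype fun _ : Fin (2 * (n + 1) + 1) => commonLinesEigenvalue (n + 1) ^ 2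
    rw [Finset.sum_const, Finset.card_univ, Fintype.card_fin, nsmul_eq_mul]
    push_cast
    rfl
  refine hdegree.sigma_of_hasSum hfiber ((summable_sigma_of_nonneg fun _ => sq_nonneg _).2
    ⟨fun n => (hfiber n).summable, ?_⟩)
  simpa only [(hfiber _).tsum_eq] using hdegree.summable

/-- The enumeration of the eigensections of a given eigenvalue: they all have the same degree. -/
def EigensectionIndex.fiberEquiv (n : ℕ) :
    {p : EigensectionIndex // commonLinesEigenvalue (p.1 + 1) = commonLinesEigenvalue (n + 1)} ≃
      Fin (2 * (n + 1) + 1) :=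
  (Equiv.subtypeEquivRight fun _ => commonLinesEigenvalue_succ_injective.eq_iff).trans
    (Equiv.sigmaSubtype n)

theorem exists_commonLinesEigenvalue_eq_iff {a : ℝ} :
    (∃ p : EigensectionIndex, commonLinesEigenvalue (p.1 + 1) = a) ↔
      ∃ n : ℕ, 1 ≤ n ∧ a = commonLinesEigenvalue n := by
  refine ⟨fun ⟨p, hp⟩ => ⟨p.1 + 1, p.1.succ_pos, hp.symm⟩, fun ⟨n, hn, ha⟩ => ?_⟩
  obtain ⟨m, rfl⟩ := Nat.exists_eq_add_of_le' hn
  exact ⟨⟨m, 0⟩, ha.symm⟩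

theorem IsCommonLinesOperator.exists_orthonormal_eigenfamily {C : Hsub μ →L[ℝ] Hsub μ}
    (hC : IsCommonLinesOperator μ C) (hμ : IsRotationInvariant μ) :
    ∃ v : EigensectionIndex → Hsub μ, Orthonormal ℝ v ∧
      ∀ p, C (v p) = commonLinesEigenvalue (p.1 + 1) • v p := by
  choose v hv hCv using fun n : ℕ => hC.exists_orthonormal_eigenvectors hμ n.succ_ne_zero
  refine ⟨fun p => v p.1 p.2, ⟨fun p => (hv p.1).1 p.2, ?_⟩, fun p => hCv p.1 p.2⟩
  rintro ⟨m, i⟩ ⟨n, j⟩ hne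
  rcases eq_or_ne m n with rfl | hmn
  · exact (hv m).2 fun hij => hne (congrArg (Sigma.mk m) hij)
  · exact inner_eq_zero_of_map_eq_smul (T := (C : Hsub μ →ₗ[ℝ] Hsub μ))
      (hC.inner_left_eq_inner_right hμ) (commonLinesEigenvalue_succ_injective.ne hmn)
      (hCv m i) (hCv n j)

end Spectrum

/-- Let `μ` be the rotation invariant probability measure on the sphere and
let `C` be the common lines operator on `H`, i.e. the operator determined by
`(Cs)(x) = ∫ C(x,y)(s(y)) dy`.  Then `C` is a compact self-adjoint operator whose set of
nonzero eigenvalues is exactly `{ (-1)^(n-1)/(n(n+1)) : n = 1, 2, ... }`, and for every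
`n ≥ 1` the eigenspace for the eigenvalue `(-1)^(n-1)/(n(n+1))` has dimension `2n+1`. -/
theorem common_lines_operator_spectrum
    (μ : Measure S2) [IsProbabilityMeasure μ]
    (hμ : ∀ g : V ≃ₗᵢ[ℝ] V, MeasurePreserving (sphereMap g) μ μ)
    (Cop : Hsub μ →L[ℝ] Hsub μ)
    (hC : ∀ s : Hsub μ, ∀ᵐ x ∂μ,
      ((Cop s : Lp V 2 μ) : S2 → V) x = ∫ y, Cker x y (((s : Lp V 2 μ) : S2 → V) y) ∂μ) :
    IsCompactOperator Cop ∧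
    (∀ f g : Hsub μ, ⟪Cop f, g⟫ = ⟪f, Cop g⟫) ∧
    (∀ lam : ℝ, lam ≠ 0 →
      (Module.End.HasEigenvalue (Cop : Hsub μ →ₗ[ℝ] Hsub μ) lam ↔
        ∃ n : ℕ, 1 ≤ n ∧ lam = (-1 : ℝ) ^ (n - 1) / (n * (n + 1)))) ∧
    (∀ n : ℕ, 1 ≤ n →
      Module.finrank ℝ
        (Module.End.eigenspace (Cop : Hsub μ →ₗ[ℝ] Hsub μ)
          ((-1 : ℝ) ^ (n - 1) / (n * (n + 1)))) = 2 * n + 1) := by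
  have hCop : IsCommonLinesOperator μ Cop := hC
  have hsymm : (Cop : Hsub μ →ₗ[ℝ] Hsub μ).IsSymmetric := hCop.inner_left_eq_inner_right hμ
  have hHS : HilbertSchmidtNormSqLE Cop 1 := hCop.hilbertSchmidtNormSqLE hμ
  obtain ⟨v, hv, hCv⟩ := hCop.exists_orthonormal_eigenfamily hμ
  have hsum : HasSum (fun p => ‖Cop (v p)‖ ^ 2) 1 := by
    simpa only [hCv, norm_smul, hv.1, mul_one, Real.norm_eq_abs, sq_abs]
      using hasSum_commonLinesEigenvalue_sq
  have hker (u : Hsub μ) (hu : ∀ p, ⟪v p, u⟫ = 0) : Cop u = 0 := hHS.apply_eq_zero hv hsum hu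
  refine ⟨hHS.isCompactOperator hv hsum, hsymm, fun lam hlam => ?_, fun n hn => ?_⟩
  · rw [hasEigenvalue_iff_exists_eq hsymm hv hCv hker hlam]
    exact exists_commonLinesEigenvalue_eq_iff
  · obtain ⟨m, rfl⟩ := Nat.exists_eq_add_of_le' hn
    have := Finite.of_equiv _ (EigensectionIndex.fiberEquiv m).symm
    exact (finrank_eigenspace_eq_card hsymm hv hCv hker
      (commonLinesEigenvalue_succ_ne_zero m)).trans
        ((Nat.card_congr (EigensectionIndex.fiberEquiv m)).trans (Nat.card_fin _))
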